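/- Let Ω ⊂ ℂⁿ (n ≥ 2) be a bounded domain and U ⊆ ℂⁿ an open set such that Ω ∩ U is log-type convex. Then for any ξ ∈ ∂Ω ∩ U there exist ε > 0 with B_ε(ξ) ⊆ U and K′ > 0 such that K_Ω(p,q) ≤ K_{Ω∩U}(p,q) ≤ K_Ω(p,q) + K′ for all p, q ∈ Ω ∩ B_ε(ξ). -/

import Mathlib

open Metric Set MeasureTheory Filter Topology

noncomputable section

variable {E : Type*} [NormedAddCommGroup E] [NormedSpace ℂ E]

/-- Distance from `x` to the boundary of `D`. -/
def bdist (D : Set E) (x : E) : ℝ := Metric.infDist x (frontier D)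

/-- Distance from `x` to the boundary of `D` along the complex line `x + ℂ v`. -/
def bdistDir (D : Set E) (x v : E) : ℝ :=
  Metric.infDist x (frontier D ∩ {w | ∃ c : ℂ, w = x + c • v})

/-- The infinitesimal Kobayashi (pseudo-)metric of `D ⊆ E`. -/
def kobMetric (D : Set E) (x v : E) : ℝ :=
  sInf { r : ℝ | ∃ (f : ℂ → E) (ξ : ℂ),
    DifferentiableOn ℂ f (ball (0:ℂ) 1) ∧ MapsTo f (ball (0:ℂ) 1) D ∧
    f 0 = x ∧ ξ • derivWithin f (ball (0:ℂ) 1) 0 = v ∧ r = ‖ξ‖ }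

/-- `σ` is absolutely continuous on `[a,b]`, with a.e. derivative `g`. -/
def IsACWithDeriv (σ g : ℝ → E) (a b : ℝ) : Prop :=
  IntervalIntegrable g volume a b ∧
  ∀ t ∈ Icc a b, σ t = σ a + ∫ s in a..t, g s

/-- The Kobayashi pseudo-distance of `D`, defined via lengths of absolutely
continuous curves (Venturini's description). -/
def kobDist (D : Set E) (x y : E) : ℝ :=
  sInf { r : ℝ | ∃ (a b : ℝ) (σ g : ℝ → E), a ≤ b ∧
    IsACWithDeriv σ g a b ∧ MapsTo σ (Icc a b) D ∧ σ a = x ∧ σ b = y ∧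
    r = ∫ t in a..b, kobMetric D (σ t) (g t) }

/-- Log-type convex domain, with explicit constants `C, ν > 0`. -/
def LogTypeConvexWith (D : Set E) (C ν : ℝ) : Prop :=
  IsOpen D ∧ D.Nonempty ∧ Bornology.IsBounded D ∧ Convex ℝ D ∧ 0 < C ∧ 0 < ν ∧
  ∀ z ∈ D, ∀ v : E, v ≠ 0 →
    bdistDir D z v ≤ C / |Real.log (bdist D z)| ^ (1 + ν)

/-- Log-type convex domain. -/
def LogTypeConvex (D : Set E) : Prop := ∃ C ν : ℝ, LogTypeConvexWith D C ν

/-- A `ℂ`-convex set: every nonempty intersection with a complex affine line is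
connected and simply connected. -/
def CConvex (D : Set E) : Prop :=
  ∀ z v : E, v ≠ 0 → (D ∩ {w | ∃ c : ℂ, w = z + c • v}).Nonempty →
    IsConnected (D ∩ {w | ∃ c : ℂ, w = z + c • v}) ∧
    SimplyConnectedSpace ↥(D ∩ {w | ∃ c : ℂ, w = z + c • v})

/-- Log-type `ℂ`-convex domain. -/
def LogTypeCConvex (D : Set E) : Prop :=
  IsOpen D ∧ D.Nonempty ∧ Bornology.IsBounded D ∧ CConvex D ∧
  ∃ C ν : ℝ, 0 < C ∧ 0 < ν ∧
    ∀ z ∈ D, ∀ v : E, v ≠ 0 →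
      bdistDir D z v ≤ C / |Real.log (bdist D z)| ^ (1 + ν)

/-- `σ : [a,b] → D` (with a.e. derivative `g`) is a `(λ,κ)`-almost geodesic for the
Kobayashi distance of `D`. -/
def AlmostGeodesicOn (D : Set E) (lam kap : ℝ) (σ g : ℝ → E) (a b : ℝ) : Prop :=
  MapsTo σ (Icc a b) D ∧ IsACWithDeriv σ g a b ∧
  (∀ s ∈ Icc a b, ∀ t ∈ Icc a b,
    (1 / lam) * |t - s| - kap ≤ kobDist D (σ s) (σ t) ∧
    kobDist D (σ s) (σ t) ≤ lam * |t - s| + kap) ∧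
  (∀ᵐ t ∂volume, t ∈ Icc a b → kobMetric D (σ t) (g t) ≤ lam)

/-- `σ : [a,b] → D` is a `C`-rough geodesic for the Kobayashi distance of `D`. -/
def RoughGeodesicOn (D : Set E) (C : ℝ) (σ : ℝ → E) (a b : ℝ) : Prop :=
  MapsTo σ (Icc a b) D ∧
  ∀ s ∈ Icc a b, ∀ t ∈ Icc a b,
    |t - s| - C ≤ kobDist D (σ s) (σ t) ∧ kobDist D (σ s) (σ t) ≤ |t - s| + C

/-- `ρ` is a `C¹` local defining function for `D` near `ξ` on the open set `W`. -/
def IsLocalDefiningFn (D : Set E) (ξ : E) (W : Set E) (ρ : E → ℝ) : Prop :=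
  IsOpen W ∧ ξ ∈ W ∧ ContDiffOn ℝ 1 ρ W ∧ (∀ x ∈ W, fderiv ℝ ρ x ≠ 0) ∧
  D ∩ W = {x ∈ W | ρ x < 0} ∧ frontier D ∩ W = {x ∈ W | ρ x = 0}

/-- `ξ` is a Dini-smooth boundary point of `D`: the boundary is `C¹` near `ξ` and the
unit normal admits a modulus of continuity `ω` satisfying the Dini condition. -/
def DiniSmoothBoundaryPoint (D : Set E) (ξ : E) : Prop :=
  ∃ (W : Set E) (ρ : E → ℝ) (ω : ℝ → ℝ),
    IsLocalDefiningFn D ξ W ρ ∧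
    (∀ t ∈ Icc (0:ℝ) 1, 0 ≤ ω t) ∧ MonotoneOn ω (Icc (0:ℝ) 1) ∧
    IntegrableOn (fun t => ω t / t) (Ioc (0:ℝ) 1) ∧
    ∀ x ∈ frontier D ∩ W, ∀ y ∈ frontier D ∩ W, ‖x - y‖ ≤ 1 →
      ‖(‖fderiv ℝ ρ x‖)⁻¹ • fderiv ℝ ρ x - (‖fderiv ℝ ρ y‖)⁻¹ • fderiv ℝ ρ y‖ ≤ ω ‖x - y‖

/-- `D` has `C^{1,ε}` boundary: near every boundary point there is a `C¹` defining
function whose differential is `ε`-Hölder. -/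
def HolderC1Boundary (D : Set E) (ε : ℝ) : Prop :=
  ∀ ξ ∈ frontier D, ∃ (W : Set E) (ρ : E → ℝ) (M : ℝ), 0 < M ∧
    IsLocalDefiningFn D ξ W ρ ∧
    ∀ x ∈ W, ∀ y ∈ W, ‖fderiv ℝ ρ x - fderiv ℝ ρ y‖ ≤ M * ‖x - y‖ ^ ε

/-- The complex affine tangent hyperplane of `∂D` at `x`, computed from a local
defining function `ρ`. -/
def complexTangentHyperplane (ρ : E → ℝ) (x : E) : Set E :=
  {w : E | fderiv ℝ ρ x (w - x) = 0 ∧ fderiv ℝ ρ x ((Complex.I : ℂ) • (w - x)) = 0}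

/-- The Gromov product of `x` and `y` with respect to the base point `o`, for the
Kobayashi distance of `D`. -/
def gromovProd (D : Set E) (o x y : E) : ℝ :=
  (kobDist D x o + kobDist D o y - kobDist D x y) / 2

end

/-! Write `D = Ω ∩ U`. Shrinking the domain increases the Kobayashi metric, whence the lower
bound. For the upper bound, an analytic disc in `Ω` centred near `ξ` at depth `δ` stays in `D` on
the disc of radius `1 - δ ^ c`, because the log-type hypothesis makes its speed integrable; hence
`k_D ≤ (1 + A * δ ^ c) * k_Ω` near `ξ`. Along a nearly minimal path of `Ω`, the depth decays
exponentially away from the deepest point since `K_D` grows at most logarithmically in the depth,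
so as long as the path stays near `ξ` its length in `D` exceeds its length in `Ω` by a bounded
amount. If the path leaves a neighbourhood of `ξ`, its initial and final pieces travel a definite
Euclidean distance and therefore reach a definite depth, so that everything in between can be
replaced, at bounded cost, by a detour through a fixed base point of `D`. -/

section RealAnalysis

lemma lipschitzOnWith_comp_absolutelyContinuousOnInterval {X Y : Type*} [PseudoMetricSpace X]
    [PseudoMetricSpace Y] {Φ : X → Y} {S : ℝ → X} {a b : ℝ} {s : Set X} {K : NNReal}
    (hΦ : LipschitzOnWith K Φ s) (hS : AbsolutelyContinuousOnInterval S a b)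
    (hm : MapsTo S (uIcc a b) s) : AbsolutelyContinuousOnInterval (Φ ∘ S) a b := by
  rw [absolutelyContinuousOnInterval_iff] at hS ⊢
  intro ε hε
  obtain ⟨δ, hδ, h⟩ := hS (ε / (K + 1)) (by positivity)
  refine ⟨δ, hδ, fun I hI hlt ↦ ?_⟩
  calc ∑ i ∈ Finset.range I.1, dist (Φ (S (I.2 i).1)) (Φ (S (I.2 i).2))
      ≤ ∑ i ∈ Finset.range I.1, K * dist (S (I.2 i).1) (S (I.2 i).2) :=
        Finset.sum_le_sum fun i hi ↦ hΦ.dist_le_mul _ (hm (hI.1 i hi).1) _ (hm (hI.1 i hi).2)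
    _ = K * ∑ i ∈ Finset.range I.1, dist (S (I.2 i).1) (S (I.2 i).2) := by rw [Finset.mul_sum]
    _ ≤ (K + 1) * ∑ i ∈ Finset.range I.1, dist (S (I.2 i).1) (S (I.2 i).2) := by
        gcongr
        linarith
    _ < ε := by
        rw [mul_comm, ← lt_div_iff₀ (by positivity)]
        exact h I hI hlt

lemma intervalIntegrable_of_le_of_le {F : Type*} [NormedAddCommGroup F] {f : ℝ → F}
    {a b c d : ℝ} (hf : IntervalIntegrable f volume a b) (hac : a ≤ c) (hcd : c ≤ d)
    (hdb : d ≤ b) : IntervalIntegrable f volume c d :=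
  hf.mono_set <| by
    rw [uIcc_of_le hcd, uIcc_of_le (hac.trans (hcd.trans hdb))]
    exact Icc_subset_Icc hac hdb

lemma primitive_mem_Icc {κ : ℝ → ℝ} {a b t : ℝ} (hκ : IntervalIntegrable κ volume a b)
    (hκ0 : ∀ t ∈ Icc a b, 0 ≤ κ t) (ht : t ∈ Icc a b) :
    ∫ s in a..t, κ s ∈ Icc 0 (∫ s in a..b, κ s) := by
  have hat : 0 ≤ ∫ s in a..t, κ s :=
    intervalIntegral.integral_nonneg ht.1 fun u hu ↦ hκ0 u ⟨hu.1, hu.2.trans ht.2⟩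
  have htb : 0 ≤ ∫ s in t..b, κ s :=
    intervalIntegral.integral_nonneg ht.2 fun u hu ↦ hκ0 u ⟨ht.1.trans hu.1, hu.2⟩
  have hadd := intervalIntegral.integral_add_adjacent_intervals
    (intervalIntegrable_of_le_of_le hκ le_rfl ht.1 ht.2)
    (intervalIntegrable_of_le_of_le hκ ht.1 ht.2 le_rfl)
  exact ⟨hat, by linarith⟩

variable {κ φ Φ F : ℝ → ℝ} {a b : ℝ}

lemma absolutelyContinuousOnInterval_comp_primitive (hab : a ≤ b)
    (hκ : IntervalIntegrable κ volume a b) (hκ0 : ∀ t ∈ Icc a b, 0 ≤ κ t)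
    (hφ : ContinuousOn φ (Ici 0)) (hΦ : ∀ x, 0 ≤ x → HasDerivAt Φ (φ x) x) :
    AbsolutelyContinuousOnInterval (fun t ↦ Φ (∫ s in a..t, κ s)) a b := by
  have hmem : MapsTo (fun t ↦ ∫ s in a..t, κ s) (uIcc a b) (Icc 0 (∫ s in a..b, κ s)) :=
    fun t ht ↦ primitive_mem_Icc hκ hκ0 (uIcc_of_le hab ▸ ht)
  obtain ⟨B, hB⟩ := isCompact_Icc.exists_bound_of_continuousOn
    (hφ.mono (Icc_subset_Ici_self : Icc 0 (∫ s in a..b, κ s) ⊆ Ici 0))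
  refine lipschitzOnWith_comp_absolutelyContinuousOnInterval (K := B.toNNReal) ?_
    (hκ.absolutelyContinuousOnInterval_intervalIntegral left_mem_uIcc) hmem
  refine Convex.lipschitzOnWith_of_nnnorm_hasDerivWithin_le (convex_Icc _ _)
    (fun x hx ↦ (hΦ x hx.1).hasDerivWithinAt) fun x hx ↦ ?_
  exact NNReal.coe_le_coe.1 ((hB x hx).trans (Real.le_coe_toNNReal B))

lemma ae_deriv_comp_primitive (hab : a ≤ b)
    (hκ : IntervalIntegrable κ volume a b) (hκ0 : ∀ t ∈ Icc a b, 0 ≤ κ t)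
    (hΦ : ∀ x, 0 ≤ x → HasDerivAt Φ (φ x) x) :
    ∀ᵐ t, t ∈ uIoc a b →
      deriv (fun t ↦ Φ (∫ s in a..t, κ s)) t = φ (∫ s in a..t, κ s) * κ t := by
  filter_upwards [hκ.ae_hasDerivAt_integral] with t hderiv ht
  have ht' := uIoc_subset_uIcc ht
  exact ((hΦ _ (primitive_mem_Icc hκ hκ0 (uIcc_of_le hab ▸ ht')).1).comp t
    (hderiv ht' a left_mem_uIcc)).deriv

lemma integral_le_of_le_comp_primitive_left (hab : a ≤ b)
    (hκ : IntervalIntegrable κ volume a b) (hκ0 : ∀ t ∈ Icc a b, 0 ≤ κ t)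
    (hφ : ContinuousOn φ (Ici 0)) (hΦ : ∀ x, 0 ≤ x → HasDerivAt Φ (φ x) x)
    (hF : IntervalIntegrable F volume a b)
    (hFle : ∀ t ∈ Icc a b, F t ≤ φ (∫ s in a..t, κ s) * κ t) :
    ∫ t in a..b, F t ≤ Φ (∫ t in a..b, κ t) - Φ 0 := by
  have hAC := absolutelyContinuousOnInterval_comp_primitive hab hκ hκ0 hφ hΦ
  have hderiv := ae_deriv_comp_primitive hab hκ hκ0 hΦ
  calc ∫ t in a..b, F t
      ≤ ∫ t in a..b, φ (∫ s in a..t, κ s) * κ t :=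
        intervalIntegral.integral_mono_on hab hF (hAC.intervalIntegrable_deriv.congr_ae
          ((ae_restrict_iff' measurableSet_uIoc).2 hderiv)) hFle
    _ = Φ (∫ t in a..b, κ t) - Φ 0 := by
        rw [← intervalIntegral.integral_congr_ae hderiv, hAC.integral_deriv_eq_sub,
          intervalIntegral.integral_same]

lemma integral_le_of_le_comp_primitive_right (hab : a ≤ b)
    (hκ : IntervalIntegrable κ volume a b) (hκ0 : ∀ t ∈ Icc a b, 0 ≤ κ t)
    (hφ : ContinuousOn φ (Ici 0)) (hΦ : ∀ x, 0 ≤ x → HasDerivAt Φ (φ x) x)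
    (hF : IntervalIntegrable F volume a b)
    (hFle : ∀ t ∈ Icc a b, F t ≤ φ (∫ s in t..b, κ s) * κ t) :
    ∫ t in a..b, F t ≤ Φ (∫ t in a..b, κ t) - Φ 0 := by
  have hmem {t : ℝ} (ht : t ∈ Icc (-b) (-a)) : -t ∈ Icc a b :=
    ⟨le_neg.2 ht.2, neg_le.2 ht.1⟩
  have hreflect := integral_le_of_le_comp_primitive_left (κ := fun t ↦ κ (-t))
    (F := fun t ↦ F (-t)) (neg_le_neg hab)
    (by simpa using (hκ.comp_sub_left 0).symm) (fun t ht ↦ hκ0 _ (hmem ht)) hφ hΦ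
    (by simpa using (hF.comp_sub_left 0).symm)
    (fun t ht ↦ by
      rw [intervalIntegral.integral_comp_neg, neg_neg]
      exact hFle _ (hmem ht))
  simpa only [intervalIntegral.integral_comp_neg, neg_neg] using hreflect

lemma integral_le_of_le_comp_abs_primitive {t₀ M : ℝ} (ht₀ : t₀ ∈ Icc a b)
    (hκ : IntervalIntegrable κ volume a b) (hκ0 : ∀ t ∈ Icc a b, 0 ≤ κ t)
    (hφ : ContinuousOn φ (Ici 0)) (hΦ : ∀ x, 0 ≤ x → HasDerivAt Φ (φ x) x)
    (hM : ∀ x, 0 ≤ x → Φ x - Φ 0 ≤ M) (hF : IntervalIntegrable F volume a b)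
    (hFle : ∀ t ∈ Icc a b, F t ≤ φ |∫ s in t₀..t, κ s| * κ t) :
    ∫ t in a..b, F t ≤ 2 * M := by
  have hκ0l : ∀ t ∈ Icc a t₀, 0 ≤ κ t := fun t ht ↦ hκ0 t ⟨ht.1, ht.2.trans ht₀.2⟩
  have hκ0r : ∀ t ∈ Icc t₀ b, 0 ≤ κ t := fun t ht ↦ hκ0 t ⟨ht₀.1.trans ht.1, ht.2⟩
  have hleft : ∫ t in a..t₀, F t ≤ M := by
    refine (integral_le_of_le_comp_primitive_right ht₀.1
      (intervalIntegrable_of_le_of_le hκ le_rfl ht₀.1 ht₀.2) hκ0l hφ hΦ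
      (intervalIntegrable_of_le_of_le hF le_rfl ht₀.1 ht₀.2) fun t ht ↦ ?_).trans
      (hM _ (intervalIntegral.integral_nonneg ht₀.1 hκ0l))
    have h := hFle t ⟨ht.1, ht.2.trans ht₀.2⟩
    rwa [intervalIntegral.integral_symm, abs_neg, abs_of_nonneg
      (intervalIntegral.integral_nonneg ht.2 fun u hu ↦ hκ0l u ⟨ht.1.trans hu.1, hu.2⟩)] at h
  have hright : ∫ t in t₀..b, F t ≤ M := by
    refine (integral_le_of_le_comp_primitive_left ht₀.2
      (intervalIntegrable_of_le_of_le hκ ht₀.1 ht₀.2 le_rfl) hκ0r hφ hΦ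
      (intervalIntegrable_of_le_of_le hF ht₀.1 ht₀.2 le_rfl) fun t ht ↦ ?_).trans
      (hM _ (intervalIntegral.integral_nonneg ht₀.2 hκ0r))
    have h := hFle t ⟨ht₀.1.trans ht.1, ht.2⟩
    rwa [abs_of_nonneg (intervalIntegral.integral_nonneg ht.1 fun u hu ↦
      hκ0r u ⟨hu.1, hu.2.trans ht.2⟩)] at h
  rw [← intervalIntegral.integral_add_adjacent_intervals
    (intervalIntegrable_of_le_of_le hF le_rfl ht₀.1 ht₀.2)
    (intervalIntegrable_of_le_of_le hF ht₀.1 ht₀.2 le_rfl)]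
  linarith

lemma integral_le_of_le_exp_neg_abs {t₀ A k : ℝ} (ht₀ : t₀ ∈ Icc a b) (hk : 0 < k) (hA : 0 ≤ A)
    (hκ : IntervalIntegrable κ volume a b) (hκ0 : ∀ t ∈ Icc a b, 0 ≤ κ t)
    (hF : IntervalIntegrable F volume a b)
    (hFle : ∀ t ∈ Icc a b, F t ≤ A * Real.exp (-k * |∫ s in t₀..t, κ s|) * κ t) :
    ∫ t in a..b, F t ≤ 2 * (A / k) := by
  refine integral_le_of_le_comp_abs_primitive (φ := fun x ↦ A * Real.exp (-k * x))
    (Φ := fun x ↦ -(A / k * Real.exp (-k * x))) ht₀ hκ hκ0 (by fun_prop) (fun x _ ↦ ?_)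
    (fun x _ ↦ ?_) hF hFle
  · refine ((((hasDerivAt_id x).const_mul (-k)).exp).const_mul (A / k)).neg.congr_deriv ?_
    simp only [id]
    field_simp
  · have : 0 ≤ A / k * Real.exp (-k * x) := by positivity
    simp only [mul_zero, Real.exp_zero]
    linarith

lemma integral_le_of_le_rpow_neg_abs {t₀ B k m ν : ℝ} (ht₀ : t₀ ∈ Icc a b) (hk : 0 < k)
    (hB : 0 ≤ B) (hm : 0 < m) (hν : 0 < ν) (hκ : IntervalIntegrable κ volume a b)
    (hκ0 : ∀ t ∈ Icc a b, 0 ≤ κ t) (hF : IntervalIntegrable F volume a b)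
    (hFle : ∀ t ∈ Icc a b, F t ≤ B * (m + k * |∫ s in t₀..t, κ s|) ^ (-(1 + ν)) * κ t) :
    ∫ t in a..b, F t ≤ 2 * (B / (k * ν) * m ^ (-ν)) := by
  have hpos {x : ℝ} (hx : 0 ≤ x) : 0 < m + k * x := by positivity
  refine integral_le_of_le_comp_abs_primitive (φ := fun x ↦ B * (m + k * x) ^ (-(1 + ν)))
    (Φ := fun x ↦ -(B / (k * ν) * (m + k * x) ^ (-ν))) ht₀ hκ hκ0 ?_ (fun x hx ↦ ?_)
    (fun x hx ↦ ?_) hF hFle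
  · exact continuousOn_const.mul
      (ContinuousOn.rpow_const (by fun_prop) fun x hx ↦ .inl (hpos hx).ne')
  · refine (((((hasDerivAt_id x).const_mul k).const_add m).rpow_const (p := -ν)
      (.inl (hpos hx).ne')).const_mul (B / (k * ν))).neg.congr_deriv ?_
    rw [← neg_add', add_comm ν 1]
    simp only [id]
    field_simp
  · have : 0 ≤ B / (k * ν) * (m + k * x) ^ (-ν) := by
      have := hpos hx
      positivity
    simp only [mul_zero, add_zero]
    linarith

lemma mul_one_sub_rpow_le_of_deriv_le {h h' : ℝ → ℝ} {c s : ℝ} (hs0 : 0 ≤ s) (hs1 : s < 1)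
    (hderiv : ∀ t ∈ Icc 0 s, HasDerivAt h (h' t) t)
    (hle : ∀ t ∈ Icc 0 s, h' t * (1 - t) ≤ c * h t) : h s * (1 - s) ^ c ≤ h 0 := by
  have hG : ∀ t ∈ Icc 0 s, HasDerivAt (fun t ↦ h t * (1 - t) ^ c)
      (h' t * (1 - t) ^ c + h t * (-1 * c * (1 - t) ^ (c - 1))) t := fun t ht ↦
    (hderiv t ht).mul <| ((hasDerivAt_id t).const_sub 1).rpow_const
      (.inl (by simp only [id]; linarith [ht.2]))
  have hanti : AntitoneOn (fun t ↦ h t * (1 - t) ^ c) (Icc 0 s) := by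
    refine antitoneOn_of_deriv_nonpos (convex_Icc 0 s)
      (fun t ht ↦ (hG t ht).continuousAt.continuousWithinAt)
      (fun t ht ↦ (hG t (interior_subset ht)).differentiableAt.differentiableWithinAt) ?_
    intro t ht
    replace ht := interior_subset ht
    have h1t : 0 < 1 - t := by linarith [ht.2]
    rw [(hG t ht).deriv]
    calc h' t * (1 - t) ^ c + h t * (-1 * c * (1 - t) ^ (c - 1))
        = (h' t * (1 - t) - c * h t) * (1 - t) ^ (c - 1) := by
          rw [show (1 - t) ^ c = (1 - t) ^ (c - 1) * (1 - t) by
            rw [← Real.rpow_add_one h1t.ne', sub_add_cancel]]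
          ring
      _ ≤ 0 := mul_nonpos_of_nonpos_of_nonneg (by linarith [hle t ht])
          (Real.rpow_nonneg h1t.le _)
  simpa using hanti (left_mem_Icc.2 hs0) (right_mem_Icc.2 hs0) hs0

lemma norm_sub_le_neg_mul_log_one_sub {F : Type*} [NormedAddCommGroup F] [NormedSpace ℝ F]
    {γ γ' : ℝ → F} {K s : ℝ} (hs0 : 0 ≤ s) (hs1 : s < 1)
    (hderiv : ∀ t ∈ Icc 0 s, HasDerivAt γ (γ' t) t)
    (hle : ∀ t ∈ Ico 0 s, ‖γ' t‖ ≤ K / (1 - t)) :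
    ‖γ s - γ 0‖ ≤ -(K * Real.log (1 - s)) := by
  have hB : ∀ t ∈ Icc 0 s, HasDerivAt (fun t ↦ -(K * Real.log (1 - t))) (K / (1 - t)) t := by
    intro t ht
    have h := (((hasDerivAt_id t).const_sub 1).log
      (by simp only [id]; linarith [ht.2])).const_mul K |>.neg
    exact h.congr_deriv (by simp only [id]; ring)
  exact image_norm_le_of_norm_deriv_right_le_deriv_boundary' (f := fun t ↦ γ t - γ 0)
    (B := fun t ↦ -(K * Real.log (1 - t)))
    (fun t ht ↦ ((hderiv t ht).sub_const _).continuousAt.continuousWithinAt)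
    (fun t ht ↦ ((hderiv t (Ico_subset_Icc_self ht)).sub_const _).hasDerivWithinAt)
    (by simp) (fun t ht ↦ (hB t ht).continuousAt.continuousWithinAt)
    (fun t ht ↦ (hB t (Ico_subset_Icc_self ht)).hasDerivWithinAt) hle (right_mem_Icc.2 hs0)

lemma exists_first_hitting_time {d : ℝ → ℝ} {a b c : ℝ} (hab : a ≤ b)
    (hd : ContinuousOn d (Icc a b)) (ha : d a ≤ c) (hb : c ≤ d b) :
    ∃ t ∈ Icc a b, d t = c ∧ ∀ s ∈ Ico a t, d s < c := by
  have hcpt : IsCompact {t ∈ Icc a b | d t = c} :=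
    isCompact_Icc.of_isClosed_subset
      (hd.preimage_isClosed_of_isClosed isClosed_Icc isClosed_singleton) (sep_subset _ _)
  obtain ⟨t₀, ht₀, ht₀c⟩ := intermediate_value_Icc hab hd ⟨ha, hb⟩
  obtain ⟨t, ⟨ht, htc⟩, hmin⟩ := hcpt.exists_isLeast ⟨t₀, ht₀, ht₀c⟩
  refine ⟨t, ht, htc, fun s hs ↦ ?_⟩
  by_contra! hcs
  have hsb : s ≤ b := hs.2.le.trans ht.2
  obtain ⟨u, hu, huc⟩ := intermediate_value_Icc hs.1
    (hd.mono (Icc_subset_Icc_right hsb)) ⟨ha, hcs⟩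
  exact absurd (hmin ⟨⟨hu.1, hu.2.trans hsb⟩, huc⟩) (not_le.2 (hu.2.trans_lt hs.2))

lemma exists_last_hitting_time {d : ℝ → ℝ} {a b c : ℝ} (hab : a ≤ b)
    (hd : ContinuousOn d (Icc a b)) (ha : c ≤ d a) (hb : d b ≤ c) :
    ∃ t ∈ Icc a b, d t = c ∧ ∀ s ∈ Ioc t b, d s < c := by
  have hneg {t : ℝ} (ht : t ∈ Icc (-b) (-a)) : -t ∈ Icc a b := ⟨le_neg.2 ht.2, neg_le.2 ht.1⟩
  obtain ⟨t, ht, htc, hlt⟩ := exists_first_hitting_time (d := fun t ↦ d (-t)) (neg_le_neg hab)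
    (hd.comp continuousOn_neg fun t ht ↦ hneg ht) (by simpa using hb) (by simpa using ha)
  refine ⟨-t, hneg ht, htc, fun s hs ↦ ?_⟩
  simpa using hlt (-s) ⟨neg_le_neg hs.2, neg_lt.1 hs.1⟩

end RealAnalysis

section AnalyticDiscs

variable {E : Type*} [NormedAddCommGroup E] [NormedSpace ℂ E]

/-- `f` restricts to an analytic disc in `D` centred at `x`, that is, a competitor in the definition
of the Kobayashi metric of `D` at `x`. The values of `f` off the unit disc are irrelevant. -/
structure IsAnalyticDisc (D : Set E) (x : E) (f : ℂ → E) : Prop where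
  differentiableOn : DifferentiableOn ℂ f (ball 0 1)
  mapsTo : MapsTo f (ball 0 1) D
  map_zero : f 0 = x

namespace IsAnalyticDisc

variable {D D' : Set E} {x : E} {f : ℂ → E}

lemma mono (hf : IsAnalyticDisc D x f) (hDD' : D ⊆ D') : IsAnalyticDisc D' x f :=
  ⟨hf.differentiableOn, hf.mapsTo.mono_right hDD', hf.map_zero⟩

lemma mem (hf : IsAnalyticDisc D x f) {w : ℂ} (hw : ‖w‖ < 1) : f w ∈ D :=
  hf.mapsTo (by simpa using hw)

lemma center_mem (hf : IsAnalyticDisc D x f) : x ∈ D := hf.map_zero ▸ hf.mem (by simp)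

lemma hasDerivAt (hf : IsAnalyticDisc D x f) {w : ℂ} (hw : ‖w‖ < 1) :
    HasDerivAt f (deriv f w) w :=
  (hf.differentiableOn.differentiableAt (isOpen_ball.mem_nhds (by simpa using hw))).hasDerivAt

lemma comp_affine (hf : IsAnalyticDisc D' x f) {a : ℂ} {ρ : ℝ} (hρ : 0 < ρ) (ha : ‖a‖ + ρ ≤ 1)
    (hD : ∀ w, ‖w - a‖ < ρ → f w ∈ D) : IsAnalyticDisc D (f a) fun w ↦ f (a + ρ * w) := by
  have hnorm {w : ℂ} (hw : w ∈ ball (0 : ℂ) 1) : ‖(ρ : ℂ) * w‖ < ρ := by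
    rw [norm_mul, Complex.norm_real, Real.norm_eq_abs, abs_of_pos hρ]
    exact mul_lt_of_lt_one_right hρ (by simpa using hw)
  refine ⟨hf.differentiableOn.comp (by fun_prop) fun w hw ↦ ?_, fun w hw ↦ hD _ ?_, by simp⟩
  · rw [mem_ball_zero_iff]
    linarith [norm_add_le a (ρ * w), hnorm hw]
  · simpa using hnorm hw

lemma hasDerivAt_comp_affine (hf : IsAnalyticDisc D x f) {a : ℂ} (ha : ‖a‖ < 1) (ρ : ℝ) :
    HasDerivAt (fun w : ℂ ↦ f (a + ρ * w)) ((ρ : ℂ) • deriv f a) 0 := by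
  have haff : HasDerivAt (fun w : ℂ ↦ a + ρ * w) ρ 0 := by
    simpa using ((hasDerivAt_id (0 : ℂ)).const_mul (ρ : ℂ)).const_add a
  exact (show HasDerivAt f (deriv f a) (a + ρ * 0) by simpa using hf.hasDerivAt ha).scomp 0 haff

lemma hasDerivAt_ray (hf : IsAnalyticDisc D x f) {ζ : ℂ} (hζ : ‖ζ‖ = 1) {s : ℝ} (hs0 : 0 ≤ s)
    (hs1 : s < 1) : HasDerivAt (fun t : ℝ ↦ f (t * ζ)) (ζ • deriv f (s * ζ)) s := by
  have hline : HasDerivAt (fun t : ℝ ↦ (t : ℂ) * ζ) ζ s := by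
    simpa using (Complex.ofRealCLM.hasDerivAt (x := s)).mul_const ζ
  exact (hf.hasDerivAt (by simpa [hζ, abs_of_nonneg hs0] using hs1)).scomp s hline

lemma exists_forall_perturb (hD : IsOpen D) (hf : IsAnalyticDisc D x f) {r : ℝ} (hr0 : 0 < r)
    (hr1 : r < 1) : ∃ η > 0, ∀ y u : E, ‖y‖ + ‖u‖ < η →
      IsAnalyticDisc D (x + y) fun w ↦ f (0 + r * w) + (y + w • u) := by
  have hsub : closedBall (0 : ℂ) r ⊆ ball 0 1 := closedBall_subset_ball hr1
  have hcpt : IsCompact (f '' closedBall (0 : ℂ) r) :=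
    (isCompact_closedBall _ _).image_of_continuousOn (hf.differentiableOn.continuousOn.mono hsub)
  obtain ⟨η, hη, hηD⟩ := hcpt.exists_thickening_subset_open hD
    (image_subset_iff.2 fun w hw ↦ hf.mapsTo (hsub hw))
  have hmem {w : ℂ} (hw : w ∈ ball (0 : ℂ) 1) : 0 + r * w ∈ closedBall (0 : ℂ) r := by
    rw [mem_closedBall_zero_iff, zero_add, norm_mul, Complex.norm_real, Real.norm_eq_abs,
      abs_of_pos hr0]
    exact mul_le_of_le_one_right hr0.le (mem_ball_zero_iff.1 hw).le
  refine ⟨η, hη, fun y u hyu ↦ ⟨?_, fun w hw ↦ hηD ?_, by simp [hf.map_zero]⟩⟩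
  · exact (hf.differentiableOn.comp (by fun_prop) fun w hw ↦ hsub (hmem hw)).add (by fun_prop)
  · refine mem_thickening_iff.2 ⟨_, mem_image_of_mem f (hmem hw), ?_⟩
    calc dist (f (0 + r * w) + (y + w • u)) (f (0 + r * w)) = ‖y + w • u‖ :=
          dist_self_add_left _ _
      _ ≤ ‖y‖ + ‖w‖ * ‖u‖ := norm_smul w u ▸ norm_add_le _ _
      _ ≤ ‖y‖ + 1 * ‖u‖ := by gcongr; exact (mem_ball_zero_iff.1 hw).le
      _ < η := by rwa [one_mul]

end IsAnalyticDisc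

lemma isAnalyticDisc_add_smul {D : Set E} {x v : E} {r : ℝ} (hr : 0 < r) (hb : ball x r ⊆ D)
    (hv : ‖v‖ ≤ r) : IsAnalyticDisc D x fun w ↦ x + w • v := by
  refine ⟨by fun_prop, fun w hw ↦ hb ?_, by simp⟩
  rw [mem_ball, dist_self_add_left, norm_smul]
  exact (mul_le_mul_of_nonneg_left hv (norm_nonneg w)).trans_lt
    (mul_lt_of_lt_one_left hr (by simpa using hw))

end AnalyticDiscs

section KobayashiMetric

variable {E : Type*} [NormedAddCommGroup E] [NormedSpace ℂ E] {D D' : Set E} {x v : E}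

lemma kobMetric_nonneg (D : Set E) (x v : E) : 0 ≤ kobMetric D x v := by
  apply Real.sInf_nonneg
  rintro r ⟨f, ξ, -, -, -, -, rfl⟩
  exact norm_nonneg ξ

lemma kobMetric_le_of_hasDerivAt {f : ℂ → E} {u : E} {ξ : ℂ} (hf : IsAnalyticDisc D x f)
    (hderiv : HasDerivAt f u 0) (hv : ξ • u = v) : kobMetric D x v ≤ ‖ξ‖ := by
  refine csInf_le ⟨0, ?_⟩ ⟨f, ξ, hf.differentiableOn, hf.mapsTo, hf.map_zero, ?_, rfl⟩
  · rintro r ⟨f, ξ, -, -, -, -, rfl⟩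
    exact norm_nonneg ξ
  · rw [derivWithin_of_isOpen isOpen_ball (mem_ball_self one_pos), hderiv.deriv, hv]

lemma exists_isAnalyticDisc_of_ball (v : E) {r : ℝ} (hr : 0 < r) (hb : ball x r ⊆ D) :
    ∃ (f : ℂ → E) (u : E) (ξ : ℂ),
      IsAnalyticDisc D x f ∧ HasDerivAt f u 0 ∧ ξ • u = v ∧ ‖ξ‖ = ‖v‖ / r := by
  refine ⟨fun w ↦ x + w • (((r / ‖v‖ : ℝ) : ℂ) • v), ((r / ‖v‖ : ℝ) : ℂ) • v,
    ((‖v‖ / r : ℝ) : ℂ), isAnalyticDisc_add_smul hr hb ?_, ?_, ?_, ?_⟩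
  · rw [norm_smul, Complex.norm_real, norm_div, norm_norm, Real.norm_of_nonneg hr.le,
      div_mul_eq_mul_div]
    exact div_le_of_le_mul₀ (norm_nonneg v) hr.le le_rfl
  · simpa using ((hasDerivAt_id (0 : ℂ)).smul_const (((r / ‖v‖ : ℝ) : ℂ) • v)).const_add x
  · obtain rfl | hv := eq_or_ne v 0
    · simp
    · rw [smul_smul, ← Complex.ofReal_mul, div_mul_div_cancel₀ hr.ne',
        div_self (norm_ne_zero_iff.2 hv), Complex.ofReal_one, one_smul]
  · rw [Complex.norm_real, Real.norm_of_nonneg (by positivity)]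

lemma kobMetric_le_of_ball (v : E) {r : ℝ} (hr : 0 < r) (hb : ball x r ⊆ D) :
    kobMetric D x v ≤ ‖v‖ / r := by
  obtain ⟨f, u, ξ, hf, hu, hξ, hξr⟩ := exists_isAnalyticDisc_of_ball v hr hb
  exact hξr ▸ kobMetric_le_of_hasDerivAt hf hu hξ

lemma le_kobMetric (hD : IsOpen D) (hx : x ∈ D) {c : ℝ}
    (h : ∀ (f : ℂ → E) (ξ : ℂ), IsAnalyticDisc D x f → ξ • deriv f 0 = v → c ≤ ‖ξ‖) :
    c ≤ kobMetric D x v := by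
  have hderivWithin (f : ℂ → E) : derivWithin f (ball 0 1) 0 = deriv f 0 :=
    derivWithin_of_isOpen isOpen_ball (mem_ball_self one_pos)
  obtain ⟨r, hr, hb⟩ := Metric.isOpen_iff.1 hD x hx
  obtain ⟨f, u, ξ, hf, hu, hξ, -⟩ := exists_isAnalyticDisc_of_ball v hr hb
  refine le_csInf ⟨‖ξ‖, f, ξ, hf.differentiableOn, hf.mapsTo, hf.map_zero, ?_, rfl⟩ ?_
  · rw [hderivWithin, hu.deriv, hξ]
  · rintro r ⟨f, ξ, hdiff, hmaps, h0, hv, rfl⟩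
    exact h f ξ ⟨hdiff, hmaps, h0⟩ (hderivWithin f ▸ hv)

lemma kobMetric_of_notMem (hx : x ∉ D) : kobMetric D x v = 0 := by
  unfold kobMetric
  convert Real.sInf_empty
  rw [eq_empty_iff_forall_notMem]
  rintro r ⟨f, ξ, -, hmaps, rfl, -⟩
  exact hx (hmaps (mem_ball_self one_pos))

lemma kobMetric_anti (hD : IsOpen D) (hDD' : D ⊆ D') (v : E) (hx : x ∈ D) :
    kobMetric D' x v ≤ kobMetric D x v :=
  le_kobMetric hD hx fun _ _ hf hv ↦
    kobMetric_le_of_hasDerivAt (hf.mono hDD') (hf.hasDerivAt (by simp)) hv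

lemma kobMetric_neg (D : Set E) (x v : E) : kobMetric D x (-v) = kobMetric D x v := by
  unfold kobMetric
  congr 1
  ext r
  constructor <;> rintro ⟨f, ξ, hdiff, hmaps, h0, hv, rfl⟩
  · exact ⟨f, -ξ, hdiff, hmaps, h0, by rw [neg_smul, hv, neg_neg], (norm_neg ξ).symm⟩
  · exact ⟨f, -ξ, hdiff, hmaps, h0, by rw [neg_smul, hv], (norm_neg ξ).symm⟩

lemma kobMetric_le_div_of_shrink {f : ℂ → E} {ξ : ℂ} {ρ : ℝ} (hρ : 0 < ρ) (hρ1 : ρ ≤ 1)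
    (hf : IsAnalyticDisc D' x f) (hv : ξ • deriv f 0 = v) (hD : ∀ w, ‖w‖ < ρ → f w ∈ D) :
    kobMetric D x v ≤ ‖ξ‖ / ρ := by
  have hρc : (ρ : ℂ) ≠ 0 := Complex.ofReal_ne_zero.2 hρ.ne'
  have hdisc := hf.comp_affine (a := 0) (D := D) hρ (by simpa using hρ1) (by simpa using hD)
  rw [hf.map_zero] at hdisc
  have h := kobMetric_le_of_hasDerivAt (ξ := ξ / ρ) hdisc
    (hf.hasDerivAt_comp_affine (by simp) ρ)
    (by rw [smul_smul, div_mul_cancel₀ _ hρc, hv])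
  rwa [norm_div, Complex.norm_real, Real.norm_of_nonneg hρ.le] at h

lemma exists_ne_zero_of_kobMetric_lt (hD : IsOpen D) (hx : x ∈ D) {c : ℝ}
    (hc : kobMetric D x v < c) : ∃ (f : ℂ → E) (ξ : ℂ),
      IsAnalyticDisc D x f ∧ ξ • deriv f 0 = v ∧ ξ ≠ 0 ∧ ‖ξ‖ < c := by
  obtain rfl | hv := eq_or_ne v 0
  · have hc0 : 0 < c := (kobMetric_nonneg D x 0).trans_lt hc
    refine ⟨fun _ ↦ x, ((c / 2 : ℝ) : ℂ), ⟨by fun_prop, fun _ _ ↦ hx, rfl⟩, by simp,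
      Complex.ofReal_ne_zero.2 (half_pos hc0).ne', ?_⟩
    rw [Complex.norm_real, Real.norm_of_nonneg (half_pos hc0).le]
    exact half_lt_self hc0
  · by_contra! hcon
    refine hc.not_ge (le_kobMetric hD hx fun f ξ hf hξ ↦ hcon f ξ hf hξ ?_)
    rintro rfl
    exact hv (by simpa using hξ.symm)

lemma eventually_kobMetric_lt (hD : IsOpen D) (hx : x ∈ D) {c : ℝ} (hc : kobMetric D x v < c) :
    ∀ᶠ p : E × E in 𝓝 (x, v), kobMetric D p.1 p.2 < c := by
  obtain ⟨f, ξ, hf, hv, hξ0, hξc⟩ := exists_ne_zero_of_kobMetric_lt hD hx hc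
  have hc0 : 0 < c := (norm_nonneg ξ).trans_lt hξc
  obtain ⟨r, hξr, hr1⟩ : ∃ r, ‖ξ‖ / c < r ∧ r < 1 := exists_between ((div_lt_one hc0).2 hξc)
  have hr0 : 0 < r := (div_nonneg (norm_nonneg ξ) hc0.le).trans_lt hξr
  have hrc : (r : ℂ) ≠ 0 := Complex.ofReal_ne_zero.2 hr0.ne'
  obtain ⟨η, hη, hperturb⟩ := hf.exists_forall_perturb hD hr0 hr1
  have hnear : ∀ᶠ p : E × E in 𝓝 (x, v), ‖p.1 - x‖ + ‖(r / ξ : ℂ) • (p.2 - v)‖ < η := by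
    have hcont : Continuous fun p : E × E ↦ ‖p.1 - x‖ + ‖(r / ξ : ℂ) • (p.2 - v)‖ := by fun_prop
    exact (hcont.tendsto' (x, v) 0 (by simp)).eventually (gt_mem_nhds hη)
  filter_upwards [hnear] with p hp
  have hdisc := hperturb _ _ hp
  rw [add_sub_cancel] at hdisc
  have hlin := ((hasDerivAt_id (0 : ℂ)).smul_const ((r / ξ : ℂ) • (p.2 - v))).const_add (p.1 - x)
  have hderiv := (hf.hasDerivAt_comp_affine (a := 0) (by simp) r).add hlin
  calc kobMetric D p.1 p.2 ≤ ‖ξ / r‖ := kobMetric_le_of_hasDerivAt hdisc hderiv <| by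
        rw [one_smul, smul_add, smul_smul, smul_smul, div_mul_cancel₀ _ hrc, hv,
          div_mul_div_cancel₀ hrc, div_self hξ0, one_smul, add_sub_cancel]
    _ = ‖ξ‖ / r := by rw [norm_div, Complex.norm_real, Real.norm_of_nonneg hr0.le]
    _ < c := by rwa [div_lt_iff₀ hr0, mul_comm, ← div_lt_iff₀ hc0]

lemma measurable_kobMetric [MeasurableSpace (E × E)] [BorelSpace (E × E)] (hD : IsOpen D) :
    Measurable fun p : E × E ↦ kobMetric D p.1 p.2 := by
  have hD1 : IsOpen (Prod.fst ⁻¹' D : Set (E × E)) := hD.preimage continuous_fst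
  refine measurable_of_Iio fun c ↦ ?_
  obtain hc | hc := le_or_gt c 0
  · convert MeasurableSet.empty
    exact eq_empty_of_forall_notMem fun p hp ↦ (hc.trans (kobMetric_nonneg D p.1 p.2)).not_gt hp
  have hsplit : (fun p : E × E ↦ kobMetric D p.1 p.2) ⁻¹' Iio c =
      {p : E × E | p.1 ∈ D ∧ kobMetric D p.1 p.2 < c} ∪ (Prod.fst ⁻¹' D)ᶜ := by
    ext p
    by_cases hp : p.1 ∈ D
    · simp [hp]
    · simp [hp, kobMetric_of_notMem hp, hc]
  rw [hsplit]
  refine (IsOpen.measurableSet (isOpen_iff_mem_nhds.2 ?_)).union hD1.measurableSet.compl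
  rintro ⟨x, v⟩ ⟨hx, hv⟩
  filter_upwards [eventually_kobMetric_lt hD hx hv, hD1.mem_nhds hx] with p hlt hp using ⟨hp, hlt⟩

end KobayashiMetric

section Paths

variable {E : Type*} [NormedAddCommGroup E] [NormedSpace ℂ E]

/-- `σ` is an absolutely continuous path in `D` parametrised by `[a, b]`, with a.e. derivative `g`;
these are the paths over which the Kobayashi distance is an infimum. -/
structure IsACPathIn (D : Set E) (a b : ℝ) (σ g : ℝ → E) : Prop where
  le : a ≤ b
  ac : IsACWithDeriv σ g a b
  mapsTo : MapsTo σ (Icc a b) D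

/-- The Kobayashi length in `D` of the path `σ` on `[a, b]` with a.e. derivative `g`. -/
noncomputable def kobLength (D : Set E) (a b : ℝ) (σ g : ℝ → E) : ℝ :=
  ∫ t in a..b, kobMetric D (σ t) (g t)

/-- The set of Kobayashi lengths of the paths in `D` from `x` to `y`. The Kobayashi distance is its
infimum, which is the junk value `0` when there are no such paths. -/
def kobLengths (D : Set E) (x y : E) : Set ℝ :=
  {r | ∃ (a b : ℝ) (σ g : ℝ → E),
    IsACPathIn D a b σ g ∧ σ a = x ∧ σ b = y ∧ kobLength D a b σ g = r}

/-- The path `σ` in `D` realises the Kobayashi distance of its endpoints up to the error `η`. -/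
structure IsNearlyMinimal (D : Set E) (η a b : ℝ) (σ g : ℝ → E) : Prop where
  isACPathIn : IsACPathIn D a b σ g
  kobLength_le : kobLength D a b σ g ≤ kobDist D (σ a) (σ b) + η

variable {D D' : Set E} {a b c d η : ℝ} {σ τ g k : ℝ → E} {x y z : E}

namespace IsACPathIn

lemma continuousOn (h : IsACPathIn D a b σ g) : ContinuousOn σ (Icc a b) := by
  have hprim := intervalIntegral.continuousOn_primitive_interval' h.ac.1 left_mem_uIcc
  rw [uIcc_of_le h.le] at hprim
  exact (continuousOn_const.add hprim).congr h.ac.2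

lemma restrict (h : IsACPathIn D a b σ g) (hac : a ≤ c) (hcd : c ≤ d) (hdb : d ≤ b) :
    IsACPathIn D c d σ g := by
  refine ⟨hcd, ⟨intervalIntegrable_of_le_of_le h.ac.1 hac hcd hdb, fun t ht ↦ ?_⟩,
    h.mapsTo.mono_left (Icc_subset_Icc hac hdb)⟩
  have htb := ht.2.trans hdb
  rw [h.ac.2 t ⟨hac.trans ht.1, htb⟩, h.ac.2 c ⟨hac, hcd.trans hdb⟩, add_assoc,
    intervalIntegral.integral_add_adjacent_intervals
      (intervalIntegrable_of_le_of_le h.ac.1 le_rfl hac (hcd.trans hdb))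
      (intervalIntegrable_of_le_of_le h.ac.1 hac ht.1 htb)]

lemma mono (h : IsACPathIn D a b σ g) (hDD' : D ⊆ D') : IsACPathIn D' a b σ g :=
  ⟨h.le, h.ac, h.mapsTo.mono_right hDD'⟩

lemma congr (h : IsACPathIn D a b σ g) (hσ : EqOn σ τ (Icc a b)) (hg : EqOn g k (Ioc a b)) :
    IsACPathIn D a b τ k := by
  refine ⟨h.le, ⟨h.ac.1.congr (by rwa [uIoc_of_le h.le]), fun t ht ↦ ?_⟩, h.mapsTo.congr hσ⟩
  have hgt : EqOn g k (Ioo a t) := fun s hs ↦ hg ⟨hs.1, hs.2.le.trans ht.2⟩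
  rw [← hσ ht, ← hσ (left_mem_Icc.2 h.le), h.ac.2 t ht,
    intervalIntegral.integral_congr_Ioo_of_le ht.1 hgt]

lemma trans (h : IsACPathIn D a b σ g) (h' : IsACPathIn D b c σ g) : IsACPathIn D a c σ g := by
  refine ⟨h.le.trans h'.le, ⟨h.ac.1.trans h'.ac.1, fun t ht ↦ ?_⟩, ?_⟩
  · obtain htb | hbt := le_total t b
    · exact h.ac.2 t ⟨ht.1, htb⟩
    · rw [h'.ac.2 t ⟨hbt, ht.2⟩, h.ac.2 b (right_mem_Icc.2 h.le), add_assoc,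
        intervalIntegral.integral_add_adjacent_intervals h.ac.1
          (intervalIntegrable_of_le_of_le h'.ac.1 le_rfl hbt ht.2)]
  · rw [← Icc_union_Icc_eq_Icc h.le h'.le]
    exact h.mapsTo.union h'.mapsTo

lemma comp_sub_right (h : IsACPathIn D a b σ g) (c : ℝ) :
    IsACPathIn D (a + c) (b + c) (fun t ↦ σ (t - c)) fun t ↦ g (t - c) := by
  have hmem {t : ℝ} (ht : t ∈ Icc (a + c) (b + c)) : t - c ∈ Icc a b :=
    ⟨le_sub_iff_add_le.2 ht.1, sub_le_iff_le_add.2 ht.2⟩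
  refine ⟨by linarith [h.le], ⟨h.ac.1.comp_sub_right c, fun t ht ↦ ?_⟩, fun t ht ↦
    h.mapsTo (hmem ht)⟩
  simpa only [intervalIntegral.integral_comp_sub_right, add_sub_cancel_right] using
    h.ac.2 _ (hmem ht)

lemma comp_neg (h : IsACPathIn D a b σ g) :
    IsACPathIn D (-b) (-a) (fun t ↦ σ (-t)) fun t ↦ -g (-t) := by
  have hmem {t : ℝ} (ht : t ∈ Icc (-b) (-a)) : -t ∈ Icc a b := ⟨le_neg_of_le_neg ht.2,
    neg_le_of_neg_le ht.1⟩
  refine ⟨neg_le_neg h.le, ⟨((IntervalIntegrable.iff_comp_neg).1 h.ac.1).symm.neg, fun t ht ↦ ?_⟩,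
    fun t ht ↦ h.mapsTo (hmem ht)⟩
  have htail := (h.restrict (hmem ht).1 (hmem ht).2 le_rfl).ac.2 b ⟨(hmem ht).2, le_rfl⟩
  simp only [intervalIntegral.integral_neg, intervalIntegral.integral_comp_neg, neg_neg]
  rw [htail, add_neg_cancel_right]

lemma intervalIntegrable_kobMetric (hD : IsOpen D) (h : IsACPathIn D a b σ g) :
    IntervalIntegrable (fun t ↦ kobMetric D (σ t) (g t)) volume a b := by
  borelize (E × E)
  obtain ⟨r, hr, hrD⟩ := (isCompact_Icc.image_of_continuousOn
    h.continuousOn).exists_thickening_subset_open hD h.mapsTo.image_subset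
  have hg : IntegrableOn g (Ioc a b) :=
    (intervalIntegrable_iff_integrableOn_Ioc_of_le h.le).1 h.ac.1
  have hσ : AEStronglyMeasurable σ (volume.restrict (Ioc a b)) :=
    (h.continuousOn.mono Ioc_subset_Icc_self).aestronglyMeasurable measurableSet_Ioc
  rw [intervalIntegrable_iff_integrableOn_Ioc_of_le h.le]
  refine Integrable.mono' (hg.norm.div_const r) ((measurable_kobMetric hD).comp_aemeasurable
    (hσ.prodMk hg.aestronglyMeasurable).aemeasurable).aestronglyMeasurable
    (ae_restrict_of_forall_mem measurableSet_Ioc fun t ht ↦ ?_)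
  rw [Real.norm_of_nonneg (kobMetric_nonneg _ _ _)]
  exact kobMetric_le_of_ball _ hr
    ((ball_subset_thickening (mem_image_of_mem σ (Ioc_subset_Icc_self ht)) r).trans hrD)

lemma kobLength_add (hD : IsOpen D) (h : IsACPathIn D a c σ g) (hab : a ≤ b) (hbc : b ≤ c) :
    kobLength D a b σ g + kobLength D b c σ g = kobLength D a c σ g :=
  intervalIntegral.integral_add_adjacent_intervals
    ((h.restrict le_rfl hab hbc).intervalIntegrable_kobMetric hD)
    ((h.restrict hab hbc le_rfl).intervalIntegrable_kobMetric hD)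

end IsACPathIn

lemma kobLength_nonneg (hab : a ≤ b) : 0 ≤ kobLength D a b σ g :=
  intervalIntegral.integral_nonneg hab fun _ _ ↦ kobMetric_nonneg _ _ _

lemma kobLength_congr (hab : a ≤ b) (hσ : EqOn σ τ (Icc a b)) (hg : EqOn g k (Ioc a b)) :
    kobLength D a b σ g = kobLength D a b τ k :=
  intervalIntegral.integral_congr_Ioo_of_le hab fun t ht ↦ by
    simp only [hσ (Ioo_subset_Icc_self ht), hg (Ioo_subset_Ioc_self ht)]

lemma kobLength_comp_sub_right (D : Set E) (a b c : ℝ) (σ g : ℝ → E) :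
    kobLength D (a + c) (b + c) (fun t ↦ σ (t - c)) (fun t ↦ g (t - c)) = kobLength D a b σ g := by
  simp only [kobLength]
  rw [intervalIntegral.integral_comp_sub_right fun t ↦ kobMetric D (σ t) (g t)]
  simp only [add_sub_cancel_right]

lemma kobLength_comp_neg (D : Set E) (a b : ℝ) (σ g : ℝ → E) :
    kobLength D (-b) (-a) (fun t ↦ σ (-t)) (fun t ↦ -g (-t)) = kobLength D a b σ g := by
  simp only [kobLength, kobMetric_neg]
  rw [intervalIntegral.integral_comp_neg fun t ↦ kobMetric D (σ t) (g t)]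
  simp only [neg_neg]

lemma kobDist_eq_sInf_kobLengths (D : Set E) (x y : E) : kobDist D x y = sInf (kobLengths D x y) :=
  congrArg sInf <| Set.ext fun _ ↦
    ⟨fun ⟨a, b, σ, g, hle, hac, hmaps, hx, hy, hr⟩ ↦
        ⟨a, b, σ, g, ⟨hle, hac, hmaps⟩, hx, hy, hr.symm⟩,
      fun ⟨a, b, σ, g, h, hx, hy, hr⟩ ↦ ⟨a, b, σ, g, h.le, h.ac, h.mapsTo, hx, hy, hr.symm⟩⟩

lemma kobLengths_bddBelow (D : Set E) (x y : E) : BddBelow (kobLengths D x y) := by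
  refine ⟨0, ?_⟩
  rintro _ ⟨a, b, σ, g, h, -, -, rfl⟩
  exact kobLength_nonneg h.le

lemma IsACPathIn.kobLength_mem_kobLengths (h : IsACPathIn D a b σ g) :
    kobLength D a b σ g ∈ kobLengths D (σ a) (σ b) := ⟨a, b, σ, g, h, rfl, rfl, rfl⟩

lemma IsACPathIn.kobDist_le_kobLength (h : IsACPathIn D a b σ g) :
    kobDist D (σ a) (σ b) ≤ kobLength D a b σ g := by
  rw [kobDist_eq_sInf_kobLengths]
  exact csInf_le (kobLengths_bddBelow D _ _) h.kobLength_mem_kobLengths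

lemma mem_kobLengths_symm {r : ℝ} (hr : r ∈ kobLengths D x y) : r ∈ kobLengths D y x := by
  obtain ⟨a, b, σ, g, h, rfl, rfl, rfl⟩ := hr
  exact ⟨-b, -a, _, _, h.comp_neg, by simp, by simp, kobLength_comp_neg D a b σ g⟩

lemma kobDist_comm (D : Set E) (x y : E) : kobDist D x y = kobDist D y x := by
  simp only [kobDist_eq_sInf_kobLengths]
  exact congrArg sInf (Set.ext fun _ ↦ ⟨mem_kobLengths_symm, mem_kobLengths_symm⟩)

lemma kobLength_add_mem_kobLengths (hD : IsOpen D) (h : IsACPathIn D a b σ g)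
    (h' : IsACPathIn D b c τ k) (hb : τ b = σ b) :
    kobLength D a b σ g + kobLength D b c τ k ∈ kobLengths D (σ a) (τ c) := by
  have hσ : EqOn σ (fun t ↦ if t ≤ b then σ t else τ t) (Icc a b) := fun t ht ↦ (if_pos ht.2).symm
  have hg : EqOn g (fun t ↦ if t ≤ b then g t else k t) (Ioc a b) := fun t ht ↦ (if_pos ht.2).symm
  have hτ : EqOn τ (fun t ↦ if t ≤ b then σ t else τ t) (Icc b c) := fun t ht ↦ by
    obtain rfl | hbt := ht.1.eq_or_lt
    · simpa using hb
    · exact (if_neg hbt.not_ge).symm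
  have hk : EqOn k (fun t ↦ if t ≤ b then g t else k t) (Ioc b c) := fun t ht ↦
    (if_neg ht.1.not_ge).symm
  have hglue := (h.congr hσ hg).trans (h'.congr hτ hk)
  exact ⟨a, c, _, _, hglue, (hσ (left_mem_Icc.2 h.le)).symm, (hτ (right_mem_Icc.2 h'.le)).symm, by
    rw [kobLength_congr h.le hσ hg, kobLength_congr h'.le hτ hk, hglue.kobLength_add hD h.le h'.le]⟩

lemma add_mem_kobLengths (hD : IsOpen D) {r s : ℝ} (hr : r ∈ kobLengths D x y)
    (hs : s ∈ kobLengths D y z) : r + s ∈ kobLengths D x z := by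
  obtain ⟨a, b, σ, g, h, rfl, rfl, rfl⟩ := hr
  obtain ⟨c, d, τ, k, h', hτ, rfl, rfl⟩ := hs
  have hshift := h'.comp_sub_right (b - c)
  rw [add_sub_cancel] at hshift
  have hadd := kobLength_add_mem_kobLengths hD h hshift (by simpa using hτ)
  have hlen := kobLength_comp_sub_right D c d (b - c) τ k
  rw [add_sub_cancel] at hlen
  simpa only [hlen, add_sub_cancel_right] using hadd

lemma kobDist_triangle (hD : IsOpen D) (hxy : (kobLengths D x y).Nonempty)
    (hyz : (kobLengths D y z).Nonempty) : kobDist D x z ≤ kobDist D x y + kobDist D y z := by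
  simp only [kobDist_eq_sInf_kobLengths]
  rw [← csInf_add hxy (kobLengths_bddBelow D x y) hyz (kobLengths_bddBelow D y z)]
  refine csInf_le_csInf (kobLengths_bddBelow D x z) (hxy.add hyz) ?_
  rintro _ ⟨r, hr, s, hs, rfl⟩
  exact add_mem_kobLengths hD hr hs

lemma kobDist_anti (hD : IsOpen D) (hD' : IsOpen D') (hDD' : D ⊆ D')
    (hxy : (kobLengths D x y).Nonempty) : kobDist D' x y ≤ kobDist D x y := by
  rw [kobDist_eq_sInf_kobLengths D]
  refine le_csInf hxy ?_
  rintro _ ⟨a, b, σ, g, h, rfl, rfl, rfl⟩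
  have h' := h.mono hDD'
  exact h'.kobDist_le_kobLength.trans <| intervalIntegral.integral_mono_on h.le
    (h'.intervalIntegrable_kobMetric hD') (h.intervalIntegrable_kobMetric hD) fun t ht ↦
      kobMetric_anti hD hDD' (g t) (h.mapsTo ht)

lemma isACPathIn_lineMap [CompleteSpace E] (hD : Convex ℝ D) (hx : x ∈ D) (hy : y ∈ D) :
    IsACPathIn D 0 1 (AffineMap.lineMap x y) fun _ ↦ y - x := by
  refine ⟨zero_le_one, ⟨intervalIntegrable_const, fun t _ ↦ ?_⟩, fun t ht ↦
    hD.lineMap_mem hx hy ht⟩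
  rw [intervalIntegral.integral_const, AffineMap.lineMap_apply_zero, sub_zero,
    AffineMap.lineMap_apply_module', add_comm]

lemma kobLengths_nonempty [CompleteSpace E] (hD : Convex ℝ D) (hx : x ∈ D) (hy : y ∈ D) :
    (kobLengths D x y).Nonempty :=
  ⟨_, 0, 1, _, _, isACPathIn_lineMap hD hx hy, by simp, by simp, rfl⟩

lemma kobDist_triangle_of_convex [CompleteSpace E] (hD : IsOpen D) (hc : Convex ℝ D) (hx : x ∈ D)
    (hy : y ∈ D) (hz : z ∈ D) : kobDist D x z ≤ kobDist D x y + kobDist D y z :=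
  kobDist_triangle hD (kobLengths_nonempty hc hx hy) (kobLengths_nonempty hc hy hz)

lemma IsNearlyMinimal.restrict (hD : IsOpen D) (h : IsNearlyMinimal D η a b σ g) (hac : a ≤ c)
    (hcd : c ≤ d) (hdb : d ≤ b) : IsNearlyMinimal D η c d σ g := by
  obtain ⟨hpath, hmin⟩ := h
  have hpc := hpath.restrict le_rfl hac (hcd.trans hdb)
  have hpcd := hpath.restrict hac hcd hdb
  have hpd := hpath.restrict (hac.trans hcd) hdb le_rfl
  have hadd₁ := hpath.kobLength_add hD hac (hcd.trans hdb)
  have hadd₂ := (hpath.restrict hac (hcd.trans hdb) le_rfl).kobLength_add hD hcd hdb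
  have htri₁ := kobDist_triangle hD ⟨_, hpc.kobLength_mem_kobLengths⟩
    ⟨_, (hpath.restrict hac (hcd.trans hdb) le_rfl).kobLength_mem_kobLengths⟩
  have htri₂ := kobDist_triangle hD ⟨_, hpcd.kobLength_mem_kobLengths⟩
    ⟨_, hpd.kobLength_mem_kobLengths⟩
  exact ⟨hpcd, by linarith [hpc.kobDist_le_kobLength, hpd.kobDist_le_kobLength]⟩

lemma exists_isNearlyMinimal (hη : 0 < η) (hxy : (kobLengths D x y).Nonempty) :
    ∃ (a b : ℝ) (σ g : ℝ → E), IsNearlyMinimal D η a b σ g ∧ σ a = x ∧ σ b = y := by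
  have hlt : sInf (kobLengths D x y) < kobDist D x y + η := by
    rw [← kobDist_eq_sInf_kobLengths]
    exact lt_add_of_pos_right _ hη
  obtain ⟨_, ⟨a, b, σ, g, h, rfl, rfl, rfl⟩, hr⟩ := exists_lt_of_csInf_lt hxy hlt
  exact ⟨a, b, σ, g, ⟨h, hr.le⟩, rfl, rfl⟩

end Paths

section BoundaryDistance

variable {E : Type*} [NormedAddCommGroup E] [NormedSpace ℂ E] {D : Set E} {x z p v : E}

open Set.Notation in
lemma subset_of_isPreconnected_of_disjoint_frontier {X : Type*} [TopologicalSpace X] {D s : Set X}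
    (hD : IsOpen D) (hs : IsPreconnected s) (hne : (s ∩ D).Nonempty)
    (hdisj : Disjoint (frontier D) s) : s ⊆ D := by
  have : PreconnectedSpace s := isPreconnected_iff_preconnectedSpace.1 hs
  have huniv : s ↓∩ D = univ :=
    (isClopen_preimage_val hD hdisj).eq_univ ((Subtype.preimage_coe_nonempty).2 hne)
  exact fun y hy ↦ huniv.superset (mem_univ (⟨y, hy⟩ : s))

lemma ball_bdist_subset (hD : IsOpen D) (hx : x ∈ D) : ball x (bdist D x) ⊆ D := by
  obtain h | h := le_or_gt (bdist D x) 0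
  · exact (ball_eq_empty.2 h).trans_subset (empty_subset D)
  · exact subset_of_isPreconnected_of_disjoint_frontier hD
      ((convex_ball x _).isPreconnected) ⟨x, mem_ball_self h, hx⟩ disjoint_ball_infDist.symm

lemma frontier_inter_complexLine_nonempty (hb : Bornology.IsBounded D) (hx : x ∈ D) (hv : v ≠ 0) :
    (frontier D ∩ {w | ∃ c : ℂ, w = x + c • v}).Nonempty := by
  have hcont : Continuous fun c : ℂ ↦ x + c • v := by fun_prop
  have hproper : (fun c : ℂ ↦ x + c • v) ⁻¹' D ≠ univ := fun huniv ↦ by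
    obtain ⟨R, hR⟩ := hb.subset_ball x
    have hR0 : 0 < R := by simpa using hR hx
    have hmem : x + ((R / ‖v‖ : ℝ) : ℂ) • v ∈ D := huniv.superset (mem_univ _)
    have hlt := hR hmem
    rw [mem_ball, dist_self_add_left, norm_smul, Complex.norm_real,
      Real.norm_of_nonneg (by positivity), div_mul_cancel₀ _ (norm_ne_zero_iff.2 hv)] at hlt
    exact lt_irrefl R hlt
  obtain ⟨c, hc⟩ := nonempty_frontier_iff.2 ⟨⟨0, by simpa using hx⟩, hproper⟩
  exact ⟨_, hcont.frontier_preimage_subset D hc, c, rfl⟩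

lemma frontier_nonempty_of_isBounded [Nontrivial E] (hb : Bornology.IsBounded D) (hx : x ∈ D) :
    (frontier D).Nonempty := by
  obtain ⟨v, hv⟩ := exists_ne (0 : E)
  exact (frontier_inter_complexLine_nonempty hb hx hv).mono inter_subset_left

lemma bdist_pos [Nontrivial E] (hD : IsOpen D) (hb : Bornology.IsBounded D) (hx : x ∈ D) :
    0 < bdist D x :=
  (isClosed_frontier.notMem_iff_infDist_pos (frontier_nonempty_of_isBounded hb hx)).1 fun h ↦
    (hD.frontier_eq ▸ h).2 hx

lemma bdist_le_diam [Nontrivial E] (hb : Bornology.IsBounded D) (hx : x ∈ D) :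
    bdist D x ≤ diam D := by
  obtain ⟨p, hp⟩ := frontier_nonempty_of_isBounded hb hx
  calc bdist D x ≤ dist x p := infDist_le_dist_of_mem hp
    _ ≤ diam (closure D) :=
      dist_le_diam_of_mem hb.closure (subset_closure hx) (frontier_subset_closure hp)
    _ = diam D := diam_closure D

lemma bdist_mul_re_le_dist_mul_re (hD : IsOpen D) (hx : x ∈ D) (hz : z ∈ D) {l : StrongDual ℂ E}
    (hl : ∀ y ∈ D, (l y).re < (l p).re) :
    bdist D x * (l (p - z)).re ≤ dist z p * (l (p - x)).re := by
  by_contra! hlt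
  have hz0 : 0 < (l (p - z)).re := by simpa using hl z hz
  have hx0 : 0 < (l (p - x)).re := by simpa using hl x hx
  set s : ℝ := (l (p - x)).re / (l (p - z)).re with hs
  have hmem : x + (s : ℂ) • (p - z) ∈ D := by
    apply ball_bdist_subset hD hx
    rw [mem_ball, dist_self_add_left, norm_smul, Complex.norm_real,
      Real.norm_of_nonneg (by positivity), ← dist_eq_norm, dist_comm, hs, div_mul_eq_mul_div,
      div_lt_iff₀ hz0, mul_comm]
    exact hlt
  have hvalue : (l (x + (s : ℂ) • (p - z))).re = (l p).re := by
    rw [map_add, map_smul, smul_eq_mul, Complex.add_re, Complex.re_ofReal_mul, hs,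
      div_mul_cancel₀ _ hz0.ne', map_sub, Complex.sub_re, add_sub_cancel]
  exact (hl _ hmem).ne hvalue

end BoundaryDistance

section SchwarzLemma

lemma norm_deriv_zero_le_two_mul_re {F : ℂ → ℂ} (hF : DifferentiableOn ℂ F (ball 0 1))
    (hpos : ∀ w ∈ ball (0 : ℂ) 1, 0 < (F w).re) : ‖deriv F 0‖ ≤ 2 * (F 0).re := by
  have h0 : 0 < (F 0).re := hpos 0 (mem_ball_self one_pos)
  have hbound {r : ℝ} (hr0 : 0 < r) (hr1 : r < 1) : ‖deriv F 0‖ ≤ 2 * (F 0).re / (1 - r) := by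
    have hmaps : MapsTo F (ball 0 r) (closedBall (F 0) (2 * (F 0).re * r / (1 - r))) := by
      intro w hw
      rw [mem_ball_zero_iff] at hw
      have hG := Complex.borelCaratheodory_zero (f := fun w ↦ F 0 - F w) h0 (hF.const_sub (F 0))
        (fun u hu ↦ by simpa using (hpos u hu).le) one_pos
        (mem_ball_zero_iff.2 (hw.trans hr1)) (sub_self _)
      rw [mem_closedBall, dist_comm, dist_eq_norm]
      exact hG.trans (by gcongr)
    refine (Complex.norm_deriv_le_div_of_mapsTo_ball (hF.mono (ball_subset_ball hr1.le)) hmaps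
      hr0).trans_eq ?_
    field_simp
  have hlim : Tendsto (fun r : ℝ ↦ 2 * (F 0).re / (1 - r)) (𝓝[>] 0) (𝓝 (2 * (F 0).re)) := by
    have hcont : ContinuousAt (fun r : ℝ ↦ 2 * (F 0).re / (1 - r)) 0 :=
      ContinuousAt.div (by fun_prop) (by fun_prop) (by simp)
    simpa using hcont.tendsto.mono_left nhdsWithin_le_nhds
  exact ge_of_tendsto hlim <| by
    filter_upwards [Ioo_mem_nhdsGT one_pos] with r hr using hbound hr.1 hr.2

variable {E : Type*} [NormedAddCommGroup E] [NormedSpace ℂ E] {D : Set E} {x p : E} {f : ℂ → E}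
  {C ν : ℝ}

namespace IsAnalyticDisc

lemma norm_apply_deriv_le (hf : IsAnalyticDisc D x f) {l : StrongDual ℂ E}
    (hl : ∀ y ∈ D, (l y).re < (l p).re) : ‖l (deriv f 0)‖ ≤ 2 * (l (p - x)).re := by
  have hderiv : HasDerivAt (fun w ↦ l (p - f w)) (l (-deriv f 0)) 0 :=
    l.hasFDerivAt.comp_hasDerivAt 0 ((hf.hasDerivAt (by simp)).const_sub p)
  have h := norm_deriv_zero_le_two_mul_re (F := fun w ↦ l (p - f w))
    (l.differentiable.comp_differentiableOn (hf.differentiableOn.const_sub p))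
    fun w hw ↦ by simpa using hl _ (hf.mapsTo hw)
  rwa [hderiv.deriv, map_neg, norm_neg, hf.map_zero] at h

lemma norm_deriv_le_two_mul_bdistDir (hD : IsOpen D) (hb : Bornology.IsBounded D)
    (hc : Convex ℝ D) (hf : IsAnalyticDisc D x f) (hv : deriv f 0 ≠ 0) :
    ‖deriv f 0‖ ≤ 2 * bdistDir D x (deriv f 0) := by
  rw [← div_le_iff₀' two_pos]
  refine (le_infDist (frontier_inter_complexLine_nonempty hb hf.center_mem hv)).2 ?_
  rintro p ⟨hp, c, rfl⟩
  obtain ⟨l, hl⟩ := RCLike.geometric_hahn_banach_open_point (𝕜 := ℂ) hc hD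
    (hD.frontier_eq ▸ hp).2
  replace hl : ∀ y ∈ D, (l y).re < (l (x + c • deriv f 0)).re := hl
  have hpos : 0 < (l (x + c • deriv f 0 - x)).re := by simpa using hl x hf.center_mem
  have hschwarz := hf.norm_apply_deriv_le hl
  have hre := Complex.re_le_norm (l (x + c • deriv f 0 - x))
  rw [add_sub_cancel_left, map_smul] at hpos hschwarz hre
  rw [norm_smul] at hre
  have hnorm : 0 < ‖l (deriv f 0)‖ :=
    pos_of_mul_pos_right (hpos.trans_le hre) (norm_nonneg c)
  have hone : 1 ≤ 2 * ‖c‖ := le_of_mul_le_mul_right (by linarith) hnorm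
  rw [dist_self_add_right, norm_smul]
  linarith [le_mul_of_one_le_left (norm_nonneg (deriv f 0)) hone]

lemma norm_deriv_le_of_logTypeConvexWith (hD : LogTypeConvexWith D C ν)
    (hf : IsAnalyticDisc D x f) :
    ‖deriv f 0‖ ≤ 2 * C / |Real.log (bdist D x)| ^ (1 + ν) := by
  obtain ⟨hopen, -, hb, hc, hC, -, hlog⟩ := hD
  obtain hv | hv := eq_or_ne (deriv f 0) 0
  · rw [hv, norm_zero]
    positivity
  · rw [mul_div_assoc]
    exact (hf.norm_deriv_le_two_mul_bdistDir hopen hb hc hv).trans <|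
      mul_le_mul_of_nonneg_left (hlog x hf.center_mem _ hv) zero_le_two

end IsAnalyticDisc

end SchwarzLemma

section PathToCentre

variable {E : Type*} [NormedAddCommGroup E] [NormedSpace ℂ E] {D : Set E} {x y z o : E}

open scoped Pointwise in
lemma ball_lineMap_subset (hc : Convex ℝ D) {r s t : ℝ} (hr : 0 < r) (hs : 0 < s)
    (hx : ball x r ⊆ D) (hy : ball y s ⊆ D) (ht : t ∈ Ioo (0 : ℝ) 1) :
    ball (AffineMap.lineMap x y t) ((1 - t) * r + t * s) ⊆ D := by
  have ht' : 0 < 1 - t := sub_pos.2 ht.2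
  calc ball (AffineMap.lineMap x y t) ((1 - t) * r + t * s)
      = (1 - t) • ball x r + t • ball y s := by
        rw [_root_.smul_ball ht'.ne', _root_.smul_ball ht.1.ne', Real.norm_of_nonneg ht'.le,
          Real.norm_of_nonneg ht.1.le, ball_add_ball (by have := ht.1; positivity)
            (by have := ht.1; positivity), AffineMap.lineMap_apply_module]
    _ ⊆ (1 - t) • D + t • D := by gcongr
    _ ⊆ D := convex_iff_pointwise_add_subset.1 hc ht'.le ht.1.le (sub_add_cancel 1 t)

lemma integral_const_mul_inv_add_mul {K ρ c : ℝ} (hρ : 0 < ρ) (hc : 0 < c) :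
    ∫ t in (0 : ℝ)..1, K * (ρ + c * t)⁻¹ = K / c * Real.log (1 + c / ρ) := by
  rw [intervalIntegral.integral_const_mul,
    intervalIntegral.integral_comp_add_mul (fun t ↦ t⁻¹) hc.ne', mul_zero, mul_one, add_zero,
    integral_inv_of_pos hρ (by positivity), add_div, div_self hρ.ne', smul_eq_mul]
  ring

lemma kobDist_le_of_ball_subset [CompleteSpace E] (hD : IsOpen D) (hc : Convex ℝ D) (hz : z ∈ D)
    {K ρ r : ℝ} (hρ : 0 < ρ) (hρr : 2 * ρ ≤ r) (hzD : ball z ρ ⊆ D) (hoD : ball o r ⊆ D)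
    (hK : dist o z ≤ K) : kobDist D z o ≤ 2 * K / r * Real.log (1 + r / (2 * ρ)) := by
  have hr : 0 < r := by linarith
  have hpath := isACPathIn_lineMap hc hz (hoD (mem_ball_self hr))
  have hpos {t : ℝ} (ht : 0 ≤ t) : 0 < ρ + r / 2 * t := by positivity
  have hint : IntervalIntegrable (fun t ↦ K * (ρ + r / 2 * t)⁻¹) volume 0 1 := by
    refine (continuousOn_const.mul (ContinuousOn.inv₀ (by fun_prop) fun t ht ↦
      (hpos ?_).ne')).intervalIntegrable
    exact (uIcc_of_le (zero_le_one' ℝ) ▸ ht).1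
  have hmetric : ∀ t ∈ Ioo (0 : ℝ) 1,
      kobMetric D (AffineMap.lineMap z o t) (o - z) ≤ K * (ρ + r / 2 * t)⁻¹ := fun t ht ↦ by
    have hrad : ρ + r / 2 * t ≤ (1 - t) * ρ + t * r := by nlinarith [ht.1]
    rw [← div_eq_mul_inv]
    refine (kobMetric_le_of_ball _ (hpos ht.1.le) ((ball_subset_ball hrad).trans
      (ball_lineMap_subset hc hρ hr hzD hoD ht))).trans ?_
    rw [← dist_eq_norm]
    exact div_le_div_of_nonneg_right hK (hpos ht.1.le).le
  calc kobDist D z o ≤ kobLength D 0 1 (AffineMap.lineMap z o) fun _ ↦ o - z := by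
        simpa using hpath.kobDist_le_kobLength
    _ ≤ ∫ t in (0 : ℝ)..1, K * (ρ + r / 2 * t)⁻¹ :=
        intervalIntegral.integral_mono_on_of_le_Ioo zero_le_one
          (hpath.intervalIntegrable_kobMetric hD) hint hmetric
    _ = 2 * K / r * Real.log (1 + r / (2 * ρ)) := by
        rw [integral_const_mul_inv_add_mul hρ (half_pos hr), div_div r 2 ρ, div_div_eq_mul_div,
          mul_comm K 2]

lemma kobDist_le_mul_log [CompleteSpace E] [Nontrivial E] (hD : IsOpen D)
    (hb : Bornology.IsBounded D) (hc : Convex ℝ D) (hz : z ∈ D) (ho : o ∈ D) :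
    kobDist D z o ≤ 2 * diam D / bdist D o * Real.log (2 * diam D / bdist D z) := by
  have hr := bdist_pos hD hb ho
  have hδ := bdist_pos hD hb hz
  have hrM := bdist_le_diam hb ho
  have hδM := bdist_le_diam hb hz
  have hM : 0 < diam D := hr.trans_le hrM
  have hρδ : bdist D o * bdist D z / (2 * diam D) ≤ bdist D z := by
    rw [div_le_iff₀ (by positivity)]
    nlinarith
  refine (kobDist_le_of_ball_subset hD hc hz (ρ := bdist D o * bdist D z / (2 * diam D))
    (by positivity) ?_ ((ball_subset_ball hρδ).trans (ball_bdist_subset hD hz))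
    (ball_bdist_subset hD ho) (dist_le_diam_of_mem hb ho hz)).trans ?_
  · rw [← mul_div_assoc, div_le_iff₀ (by positivity)]
    nlinarith
  · have hratio : bdist D o / (2 * (bdist D o * bdist D z / (2 * diam D))) =
        diam D / bdist D z := by
      field_simp
    rw [hratio, mul_div_assoc 2 (diam D) (bdist D z)]
    gcongr
    linarith [(one_le_div hδ).2 hδM]

end PathToCentre

section Localization

variable {E : Type*} [NormedAddCommGroup E] [NormedSpace ℂ E] {Ω D V : Set E} {x z p v : E}
  {f : ℂ → E} {C ν ε r : ℝ}

/-- `D` captures the analytic discs of `Ω` near the places where they visit `V`: a disc `f` of `Ω`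
with `f a ∈ V` maps the Euclidean disc about `a` of radius `r * (1 - ‖a‖)` into `D`. The constant
`r` is uniform in `f` and `a`. -/
structure LocalizesDiscs (Ω D V : Set E) (r : ℝ) : Prop where
  pos : 0 < r
  le_one : r ≤ 1
  mem : ∀ ⦃x : E⦄ ⦃f : ℂ → E⦄, IsAnalyticDisc Ω x f → ∀ ⦃a w : ℂ⦄, ‖a‖ < 1 → f a ∈ V →
    ‖w - a‖ < r * (1 - ‖a‖) → f w ∈ D

lemma IsAnalyticDisc.dist_le_diam_div_mul (hb : Bornology.IsBounded Ω) (hf : IsAnalyticDisc Ω x f)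
    {a w : ℂ} (hw : ‖w - a‖ < 1 - ‖a‖) :
    dist (f w) (f a) ≤ diam Ω / (1 - ‖a‖) * ‖w - a‖ := by
  have hsub : ball a (1 - ‖a‖) ⊆ ball 0 1 := ball_subset_ball' (by simp)
  have ha : a ∈ ball a (1 - ‖a‖) := mem_ball_self ((norm_nonneg _).trans_lt hw)
  have hmaps : MapsTo f (ball a (1 - ‖a‖)) (closedBall (f a) (diam Ω)) := fun u hu ↦
    dist_le_diam_of_mem hb (hf.mapsTo (hsub hu)) (hf.mapsTo (hsub ha))
  rw [← dist_eq_norm]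
  exact Complex.dist_le_div_mul_dist_of_mapsTo_ball (hf.differentiableOn.mono hsub) hmaps
    (mem_ball_iff_norm.2 hw)

lemma localizesDiscs_of_ball_subset {M : ℝ} (hb : Bornology.IsBounded Ω) (hM : diam Ω ≤ M)
    (hε : 0 < ε) (hεM : ε ≤ M) (hV : ∀ y ∈ V, Ω ∩ ball y ε ⊆ D) :
    LocalizesDiscs Ω D V (ε / M) := by
  have hM0 : 0 < M := hε.trans_le hεM
  have hle : ε / M ≤ 1 := (div_le_one hM0).2 hεM
  refine ⟨div_pos hε hM0, hle, fun x f hf a w ha hfa hw ↦ hV _ hfa ⟨hf.mem ?_, ?_⟩⟩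
  all_goals
    have ha' : 0 < 1 - ‖a‖ := sub_pos.2 ha
    have hw' : ‖w - a‖ < 1 - ‖a‖ := hw.trans_le (mul_le_of_le_one_left ha'.le hle)
  · linarith [norm_le_norm_add_norm_sub' w a]
  · calc dist (f w) (f a) ≤ diam Ω / (1 - ‖a‖) * ‖w - a‖ := hf.dist_le_diam_div_mul hb hw'
      _ ≤ M / (1 - ‖a‖) * ‖w - a‖ := by gcongr
      _ < M / (1 - ‖a‖) * (ε / M * (1 - ‖a‖)) := by gcongr
      _ = ε := by field_simp

lemma kobMetric_le_div_of_forall_mem (hΩ : IsOpen Ω) (hz : z ∈ Ω) {ρ : ℝ} (hρ : 0 < ρ)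
    (hρ1 : ρ ≤ 1) (hD : ∀ f, IsAnalyticDisc Ω z f → ∀ w : ℂ, ‖w‖ < ρ → f w ∈ D) (v : E) :
    kobMetric D z v ≤ kobMetric Ω z v / ρ := by
  rw [le_div_iff₀ hρ]
  refine le_kobMetric hΩ hz fun f ξ hf hv ↦ ?_
  rw [← le_div_iff₀ hρ]
  exact kobMetric_le_div_of_shrink hρ hρ1 hf hv (hD f hf)

lemma half_neg_log_le_abs_log {b δ s : ℝ} (hb : 0 < b) (hδ : 0 < δ) (hs : s < 1) (hr : 0 < r)
    (hbδ : b * (1 - s) ^ (2 / r) ≤ δ) (hδs : δ ^ (r / 4) ≤ 1 - s) :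
    -Real.log δ / 2 ≤ |Real.log b| := by
  have hs' : 0 < 1 - s := sub_pos.2 hs
  have hlogb : Real.log b + 2 / r * Real.log (1 - s) ≤ Real.log δ := by
    rw [← Real.log_rpow hs', ← Real.log_mul hb.ne' (by positivity)]
    exact Real.log_le_log (by positivity) hbδ
  have hlogs : r / 4 * Real.log δ ≤ Real.log (1 - s) := by
    rw [← Real.log_rpow hδ]
    exact Real.log_le_log (by positivity) hδs
  have hhalf : Real.log δ / 2 ≤ 2 / r * Real.log (1 - s) :=
    calc Real.log δ / 2 = 2 / r * (r / 4 * Real.log δ) := by field_simp; norm_num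
      _ ≤ 2 / r * Real.log (1 - s) := by gcongr
  exact le_trans (by linarith) (neg_le_abs (Real.log b))

lemma mul_rpow_neg_lt_of_two_mul_rpow_lt {Λ : ℝ} (hC : 0 < C) (hν : 0 < ν) (hε : 0 < ε)
    (hΛ : 2 * (C / ε) ^ (1 / ν) < Λ) : C * (Λ / 2) ^ (-ν) < ε := by
  have hX : 0 < (C / ε) ^ (1 / ν) := by positivity
  have hlt : C / ε < (Λ / 2) ^ ν := by
    have h := Real.rpow_lt_rpow hX.le (show (C / ε) ^ (1 / ν) < Λ / 2 by linarith) hν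
    rwa [← Real.rpow_mul (by positivity), one_div_mul_cancel hν.ne', Real.rpow_one] at h
  rw [Real.rpow_neg (by linarith), ← div_eq_mul_inv, div_lt_comm₀ (by
    exact Real.rpow_pos_of_pos (by linarith) ν) hε]
  exact hlt

namespace LocalizesDiscs

lemma isAnalyticDisc_comp_affine (h : LocalizesDiscs Ω D V r) (hf : IsAnalyticDisc Ω x f) {a : ℂ}
    (ha : ‖a‖ < 1) (hfa : f a ∈ V) :
    IsAnalyticDisc D (f a) fun w ↦ f (a + (r * (1 - ‖a‖) : ℝ) * w) := by
  have ha' : 0 < 1 - ‖a‖ := sub_pos.2 ha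
  refine hf.comp_affine (mul_pos h.pos ha') ?_ fun w hw ↦ h.mem hf ha hfa hw
  linarith [mul_le_of_le_one_left ha'.le h.le_one]

lemma mul_norm_deriv_le (h : LocalizesDiscs Ω D V r) (hD : LogTypeConvexWith D C ν)
    (hf : IsAnalyticDisc Ω x f) {a : ℂ} (ha : ‖a‖ < 1) (hfa : f a ∈ V) :
    r * (1 - ‖a‖) * ‖deriv f a‖ ≤ 2 * C / |Real.log (bdist D (f a))| ^ (1 + ν) := by
  have hle := (h.isAnalyticDisc_comp_affine hf ha hfa).norm_deriv_le_of_logTypeConvexWith hD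
  rwa [(hf.hasDerivAt_comp_affine ha _).deriv, norm_smul, Complex.norm_real,
    Real.norm_of_nonneg (mul_pos h.pos (sub_pos.2 ha)).le] at hle

lemma mul_norm_apply_deriv_le (h : LocalizesDiscs Ω D V r) (hf : IsAnalyticDisc Ω x f) {a : ℂ}
    (ha : ‖a‖ < 1) (hfa : f a ∈ V) {l : StrongDual ℂ E} (hl : ∀ y ∈ D, (l y).re < (l p).re) :
    r * (1 - ‖a‖) * ‖l (deriv f a)‖ ≤ 2 * (l (p - f a)).re := by
  have hle := (h.isAnalyticDisc_comp_affine hf ha hfa).norm_apply_deriv_le hl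
  rwa [(hf.hasDerivAt_comp_affine ha _).deriv, map_smul, norm_smul, Complex.norm_real,
    Real.norm_of_nonneg (mul_pos h.pos (sub_pos.2 ha)).le] at hle

lemma re_mul_one_sub_rpow_le (h : LocalizesDiscs Ω D V r) (hf : IsAnalyticDisc Ω x f) {ζ : ℂ}
    (hζ : ‖ζ‖ = 1) {s : ℝ} (hs0 : 0 ≤ s) (hs1 : s < 1) (hV : ∀ t ∈ Icc 0 s, f (t * ζ) ∈ V)
    {l : StrongDual ℂ E} (hl : ∀ y ∈ D, (l y).re < (l p).re) :
    (l (p - f (s * ζ))).re * (1 - s) ^ (2 / r) ≤ (l (p - x)).re := by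
  have hderiv (t : ℝ) (ht : t ∈ Icc 0 s) : HasDerivAt (fun t : ℝ ↦ (l (p - f (t * ζ))).re)
      (l (-(ζ • deriv f (t * ζ)))).re t :=
    Complex.reCLM.hasFDerivAt.comp_hasDerivAt t <|
      (l.restrictScalars ℝ).hasFDerivAt.comp_hasDerivAt t <|
        (hf.hasDerivAt_ray hζ ht.1 (ht.2.trans_lt hs1)).const_sub p
  have hle (t : ℝ) (ht : t ∈ Icc 0 s) :
      (l (-(ζ • deriv f (t * ζ)))).re * (1 - t) ≤ 2 / r * (l (p - f (t * ζ))).re := by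
    have ht1 : t < 1 := ht.2.trans_lt hs1
    have hnorm : ‖(t : ℂ) * ζ‖ = t := by simp [hζ, abs_of_nonneg ht.1]
    have hbound := h.mul_norm_apply_deriv_le hf (by rwa [hnorm]) (hV t ht) hl
    have hre : (l (-(ζ • deriv f (t * ζ)))).re ≤ ‖l (deriv f (t * ζ))‖ := by
      refine (Complex.re_le_norm _).trans_eq ?_
      rw [map_neg, norm_neg, map_smul, norm_smul, hζ, one_mul]
    rw [hnorm] at hbound
    rw [div_mul_eq_mul_div, le_div_iff₀ h.pos]
    have := sub_pos.2 ht1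
    have := h.pos
    calc (l (-(ζ • deriv f (t * ζ)))).re * (1 - t) * r
        ≤ ‖l (deriv f (t * ζ))‖ * (1 - t) * r := by gcongr
      _ = r * (1 - t) * ‖l (deriv f (t * ζ))‖ := by ring
      _ ≤ 2 * (l (p - f (t * ζ))).re := hbound
  simpa [hf.map_zero] using mul_one_sub_rpow_le_of_deriv_le hs0 hs1 hderiv hle

lemma bdist_mul_one_sub_rpow_le [Nontrivial E] (h : LocalizesDiscs Ω D V r) (hD : IsOpen D)
    (hb : Bornology.IsBounded D) (hc : Convex ℝ D) (hf : IsAnalyticDisc Ω x f) {ζ : ℂ}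
    (hζ : ‖ζ‖ = 1) {s : ℝ} (hs0 : 0 ≤ s) (hs1 : s < 1) (hV : ∀ t ∈ Icc 0 s, f (t * ζ) ∈ V) :
    bdist D (f (s * ζ)) * (1 - s) ^ (2 / r) ≤ bdist D x := by
  have hmem (t : ℝ) (ht : t ∈ Icc 0 s) : f (t * ζ) ∈ D := by
    have hnorm : ‖(t : ℂ) * ζ‖ < 1 := by simpa [hζ, abs_of_nonneg ht.1] using ht.2.trans_lt hs1
    refine h.mem hf hnorm (hV t ht) ?_
    rw [sub_self, norm_zero]
    exact mul_pos h.pos (sub_pos.2 hnorm)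
  have hx : x ∈ D := by simpa [hf.map_zero] using hmem 0 ⟨le_rfl, hs0⟩
  refine (le_infDist (frontier_nonempty_of_isBounded hb hx)).2 fun p hp ↦ ?_
  obtain ⟨l, hl⟩ := RCLike.geometric_hahn_banach_open_point (𝕜 := ℂ) hc hD
    (hD.frontier_eq ▸ hp).2
  replace hl : ∀ y ∈ D, (l y).re < (l p).re := hl
  have hpos : 0 < (l (p - x)).re := by simpa using hl x hx
  have hpow : 0 ≤ (1 - s) ^ (2 / r) := Real.rpow_nonneg (sub_pos.2 hs1).le _
  refine le_of_mul_le_mul_right ?_ hpos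
  calc bdist D (f (s * ζ)) * (1 - s) ^ (2 / r) * (l (p - x)).re
      = bdist D (f (s * ζ)) * (l (p - x)).re * (1 - s) ^ (2 / r) := by ring
    _ ≤ dist x p * (l (p - f (s * ζ))).re * (1 - s) ^ (2 / r) := by
        exact mul_le_mul_of_nonneg_right
          (bdist_mul_re_le_dist_mul_re hD (hmem s ⟨hs0, le_rfl⟩) hx hl) hpow
    _ = dist x p * ((l (p - f (s * ζ))).re * (1 - s) ^ (2 / r)) := mul_assoc _ _ _
    _ ≤ dist x p * (l (p - x)).re := by
        gcongr
        exact h.re_mul_one_sub_rpow_le hf hζ hs0 hs1 hV hl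

lemma norm_deriv_ray_le [Nontrivial E] (h : LocalizesDiscs Ω D V r) (hD : LogTypeConvexWith D C ν)
    (hf : IsAnalyticDisc Ω x f) (hx1 : bdist D x < 1) {ζ : ℂ} (hζ : ‖ζ‖ = 1) {s : ℝ} (hs0 : 0 ≤ s)
    (hs1 : bdist D x ^ (r / 4) ≤ 1 - s) (hV : ∀ t ∈ Icc 0 s, f (t * ζ) ∈ V) :
    ‖deriv f (s * ζ)‖ ≤ 2 * C / r * (-Real.log (bdist D x) / 2) ^ (-(1 + ν)) / (1 - s) := by
  obtain ⟨hopen, -, hb, hc, hC, hν, -⟩ := id hD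
  have hr := h.pos
  have hmem {t : ℝ} (ht : t ∈ Icc 0 s) (ht1 : ‖(t : ℂ) * ζ‖ < 1) : f (t * ζ) ∈ D :=
    h.mem hf ht1 (hV t ht) (by simpa [hr] using ht1)
  have hx : x ∈ D := by simpa [hf.map_zero] using hmem (t := 0) ⟨le_rfl, hs0⟩ (by simp)
  have hδ : 0 < bdist D x := bdist_pos hopen hb hx
  have hs : 0 < 1 - s := (Real.rpow_pos_of_pos hδ _).trans_le hs1
  have hnorm : ‖(s : ℂ) * ζ‖ = s := by simp [hζ, abs_of_nonneg hs0]
  have hlt : ‖(s : ℂ) * ζ‖ < 1 := by linarith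
  have hΛ : 0 < -Real.log (bdist D x) / 2 := by linarith [Real.log_neg hδ hx1]
  have hlog := half_neg_log_le_abs_log (bdist_pos hopen hb (hmem ⟨hs0, le_rfl⟩ hlt)) hδ
    (sub_pos.1 hs) hr (h.bdist_mul_one_sub_rpow_le hopen hb hc hf hζ hs0 (sub_pos.1 hs) hV) hs1
  have hderiv := h.mul_norm_deriv_le hD hf hlt (hV s ⟨hs0, le_rfl⟩)
  rw [hnorm] at hderiv
  rw [le_div_iff₀ hs, Real.rpow_neg hΛ.le, ← div_eq_mul_inv, div_right_comm, le_div_iff₀ hr]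
  calc ‖deriv f (s * ζ)‖ * (1 - s) * r = r * (1 - s) * ‖deriv f (s * ζ)‖ := by ring
    _ ≤ 2 * C / |Real.log (bdist D (f (s * ζ)))| ^ (1 + ν) := hderiv
    _ ≤ 2 * C / (-Real.log (bdist D x) / 2) ^ (1 + ν) := by gcongr

lemma norm_sub_lt_of_ray [Nontrivial E] (h : LocalizesDiscs Ω D V r)
    (hD : LogTypeConvexWith D C ν) (hf : IsAnalyticDisc Ω x f) (hε : 0 < ε) (hx : x ∈ D)
    (hδ : bdist D x < Real.exp (-(2 * (C / ε) ^ (1 / ν)))) {ζ : ℂ} (hζ : ‖ζ‖ = 1) {s : ℝ}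
    (hs0 : 0 ≤ s) (hs1 : bdist D x ^ (r / 4) ≤ 1 - s) (hV : ∀ t ∈ Ico 0 s, f (t * ζ) ∈ V) :
    ‖f (s * ζ) - x‖ < ε := by
  obtain ⟨hopen, -, hb, -, hC, hν, -⟩ := id hD
  have hr := h.pos
  have hδ0 := bdist_pos hopen hb hx
  have hpow : 0 < bdist D x ^ (r / 4) := by positivity
  set Λ := -Real.log (bdist D x)
  have hΛ : 2 * (C / ε) ^ (1 / ν) < Λ := by
    have hlog := (Real.log_lt_iff_lt_exp hδ0).2 hδ
    linarith
  have hΛ0 : 0 < Λ := lt_trans (by positivity) hΛ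
  set K := 2 * C / r * (Λ / 2) ^ (-(1 + ν)) with hK
  have hK0 : 0 < K := by positivity
  have hspeed (t : ℝ) (ht : t ∈ Ico 0 s) : ‖ζ • deriv f (t * ζ)‖ ≤ K / (1 - t) := by
    rw [norm_smul, hζ, one_mul]
    exact h.norm_deriv_ray_le hD hf (by rw [← Real.log_neg_iff hδ0]; linarith) hζ ht.1
      (by linarith [ht.2]) fun u hu ↦ hV u ⟨hu.1, hu.2.trans_lt ht.2⟩
  have hmove := norm_sub_le_neg_mul_log_one_sub hs0 (by linarith)
    (fun t ht ↦ hf.hasDerivAt_ray hζ ht.1 (by linarith [ht.2])) hspeed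
  have hlogs : -Real.log (1 - s) ≤ r / 4 * Λ := by
    have hlog := Real.log_le_log hpow hs1
    rw [Real.log_rpow hδ0] at hlog
    linarith
  have hpowΛ : (Λ / 2) ^ (-ν) = (Λ / 2) ^ (-(1 + ν)) * (Λ / 2) := by
    rw [← Real.rpow_add_one (by positivity)]
    congr 1
    ring
  calc ‖f (s * ζ) - x‖ ≤ K * -Real.log (1 - s) := by simpa [hf.map_zero] using hmove
    _ ≤ K * (r / 4 * Λ) := mul_le_mul_of_nonneg_left hlogs hK0.le
    _ = C * (Λ / 2) ^ (-ν) := by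
        rw [hpowΛ, hK]
        field_simp
        norm_num
    _ < ε := mul_rpow_neg_lt_of_two_mul_rpow_lt hC hν hε hΛ

-- An escaping disc would have to travel a distance `ε`, but up to the first exit time its speed is
-- `O(|log δ| ^ (-(1 + ν)) / (1 - s))`, which integrates to `O(|log δ| ^ (-ν))` over
-- `0 ≤ s ≤ 1 - δ ^ (r / 4)`.
lemma mem_of_norm_lt_one_sub_rpow [Nontrivial E] (h : LocalizesDiscs Ω D V r)
    (hD : LogTypeConvexWith D C ν) (hf : IsAnalyticDisc Ω x f) (hε : 0 < ε) (hV : ball x ε ⊆ V)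
    (hδ : bdist D x < Real.exp (-(2 * (C / ε) ^ (1 / ν)))) {w : ℂ}
    (hw : ‖w‖ < 1 - bdist D x ^ (r / 4)) : f w ∈ D := by
  have hself {a : ℂ} (ha : ‖a‖ < 1) (hfa : f a ∈ V) : f a ∈ D :=
    h.mem hf ha hfa (by simpa [h.pos] using ha)
  have hx : x ∈ D := by
    simpa [hf.map_zero] using
      hself (a := 0) (by simp) (by simpa [hf.map_zero] using hV (mem_ball_self hε))
  have hpow : 0 < bdist D x ^ (r / 4) := Real.rpow_pos_of_pos (bdist_pos hD.1 hD.2.2.1 hx) _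
  have hw1 : ‖w‖ < 1 := by linarith
  refine hself hw1 (hV ?_)
  rw [mem_ball]
  by_contra! hge
  obtain ⟨ζ, hζ, hwζ⟩ : ∃ ζ : ℂ, ‖ζ‖ = 1 ∧ (‖w‖ : ℂ) * ζ = w :=
    ⟨Complex.exp (w.arg * Complex.I), Complex.norm_exp_ofReal_mul_I _,
      Complex.norm_mul_exp_arg_mul_I w⟩
  have hcont : ContinuousOn (fun t : ℝ ↦ dist (f (t * ζ)) x) (Icc 0 ‖w‖) := fun t ht ↦
    (hf.hasDerivAt_ray hζ ht.1 (ht.2.trans_lt hw1)).continuousAt.continuousWithinAt.dist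
      continuousWithinAt_const
  obtain ⟨s, hs, hsε, hbefore⟩ := exists_first_hitting_time (norm_nonneg w) hcont
    (by simpa [hf.map_zero] using hε.le) (by simpa [hwζ] using hge)
  refine (h.norm_sub_lt_of_ray hD hf hε hx hδ hζ hs.1 (by linarith [hs.2]) fun t ht ↦
    hV (mem_ball.2 (hbefore t ht))).ne ?_
  rw [← dist_eq_norm, hsε]

lemma norm_mul_rpow_le_kobMetric (h : LocalizesDiscs Ω D V r) (hΩ : IsOpen Ω)
    (hD : LogTypeConvexWith D C ν) (hz : z ∈ Ω) (hzV : z ∈ V) (v : E) :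
    ‖v‖ * |Real.log (bdist D z)| ^ (1 + ν) ≤ 2 * C / r * kobMetric Ω z v := by
  have hr := h.pos
  have hC := hD.2.2.2.2.1
  have hB : 0 < 2 * C / r := by positivity
  rw [mul_comm (2 * C / r), ← div_le_iff₀ hB]
  refine le_kobMetric hΩ hz fun f ξ hf hv ↦ ?_
  have hderiv := h.mul_norm_deriv_le hD hf (a := 0) (by simp) (by rwa [hf.map_zero])
  rw [hf.map_zero, norm_zero, sub_zero, mul_one] at hderiv
  have hspeed : ‖deriv f 0‖ * |Real.log (bdist D z)| ^ (1 + ν) ≤ 2 * C / r := by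
    rw [le_div_iff₀ hr]
    have := mul_le_of_le_div₀ (by positivity) (by positivity) hderiv
    linarith
  rw [div_le_iff₀ hB, ← hv, norm_smul, mul_assoc]
  gcongr

lemma exists_forall_kobMetric_le [Nontrivial E] (h : LocalizesDiscs Ω D V r) (hΩ : IsOpen Ω)
    (hD : LogTypeConvexWith D C ν) (hε : 0 < ε) :
    ∃ A, 0 < A ∧ ∀ z ∈ Ω, ball z ε ⊆ V → ∀ v,
      kobMetric D z v ≤ (1 + A * bdist D z ^ (r / 4)) * kobMetric Ω z v := by
  have hr := h.pos
  have hmem {z : E} {f : ℂ → E} (hf : IsAnalyticDisc Ω z f) (hzV : ball z ε ⊆ V) {w : ℂ}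
      (hw : ‖w‖ < r) : f w ∈ D :=
    h.mem hf (a := 0) (by simp) (hf.map_zero ▸ hzV (mem_ball_self hε)) (by simpa using hw)
  obtain ⟨δ₁, hδ₁, hδ₁exp, hδ₁half⟩ : ∃ δ₁ : ℝ, 0 < δ₁ ∧
      δ₁ ≤ Real.exp (-(2 * (C / ε) ^ (1 / ν))) ∧ δ₁ ^ (r / 4) ≤ 1 / 2 := by
    refine ⟨min (Real.exp (-(2 * (C / ε) ^ (1 / ν)))) ((1 / 2) ^ (r / 4)⁻¹), by positivity,
      min_le_left _ _, ?_⟩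
    rw [← Real.le_rpow_inv_iff_of_pos (by positivity) (by positivity) (by positivity)]
    exact min_le_right _ _
  refine ⟨max 2 (1 / (r * δ₁ ^ (r / 4))), by positivity, fun z hz hzV v ↦ ?_⟩
  have hk := kobMetric_nonneg Ω z v
  have hδ : 0 ≤ bdist D z := infDist_nonneg
  obtain hlt | hge := lt_or_ge (bdist D z) δ₁
  · have hhalf : bdist D z ^ (r / 4) ≤ 1 / 2 := le_trans (by gcongr) hδ₁half
    have hρ : 0 < 1 - bdist D z ^ (r / 4) := by linarith
    have hpow : 0 ≤ bdist D z ^ (r / 4) := by positivity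
    calc kobMetric D z v ≤ kobMetric Ω z v / (1 - bdist D z ^ (r / 4)) :=
          kobMetric_le_div_of_forall_mem hΩ hz hρ (by linarith) (fun f hf w hw ↦
            h.mem_of_norm_lt_one_sub_rpow hD hf hε hzV (hlt.trans_le hδ₁exp) hw) v
      _ ≤ (1 + 2 * bdist D z ^ (r / 4)) * kobMetric Ω z v := by
          rw [div_le_iff₀ hρ]
          nlinarith [mul_nonneg hpow (sub_nonneg.2 hhalf)]
      _ ≤ _ := by gcongr; exact le_max_left _ _
  · calc kobMetric D z v ≤ kobMetric Ω z v / r :=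
          kobMetric_le_div_of_forall_mem hΩ hz hr h.le_one (fun f hf w hw ↦ hmem hf hzV hw) v
      _ = 1 / (r * δ₁ ^ (r / 4)) * δ₁ ^ (r / 4) * kobMetric Ω z v := by field_simp
      _ ≤ (1 + 1 / (r * δ₁ ^ (r / 4)) * bdist D z ^ (r / 4)) * kobMetric Ω z v := by
          gcongr
          exact le_add_of_nonneg_of_le zero_le_one (by gcongr)
      _ ≤ _ := by gcongr; exact le_max_right _ _

end LocalizesDiscs

end Localization

section NearlyMinimalPaths

variable {E : Type*} [NormedAddCommGroup E] [NormedSpace ℂ E] {Ω D W : Set E} {o ξ p q : E}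
  {α C₀ A B β ν η ε a b : ℝ} {σ g : ℝ → E}

/-- `D` is a bounded convex domain whose Kobayashi distance to the point `o` grows at most
logarithmically in the distance to the boundary, with explicit constants. -/
structure IsLogGrowthDomain (D : Set E) (o : E) (α C₀ : ℝ) : Prop where
  isOpen : IsOpen D
  isBounded : Bornology.IsBounded D
  convex : Convex ℝ D
  mem : o ∈ D
  pos : 0 < α
  kobDist_le : ∀ z ∈ D, kobDist D z o ≤ α * -Real.log (bdist D z) + C₀

lemma exists_isLogGrowthDomain [CompleteSpace E] [Nontrivial E] (hD : IsOpen D)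
    (hb : Bornology.IsBounded D) (hc : Convex ℝ D) (ho : o ∈ D) :
    ∃ α C₀, IsLogGrowthDomain D o α C₀ := by
  have hr := bdist_pos hD hb ho
  have hM : 0 < diam D := hr.trans_le (bdist_le_diam hb ho)
  refine ⟨2 * diam D / bdist D o, 2 * diam D / bdist D o * Real.log (2 * diam D), hD, hb, hc, ho,
    by positivity, fun z hz ↦ (kobDist_le_mul_log hD hb hc hz ho).trans_eq ?_⟩
  rw [Real.log_div (by positivity) (bdist_pos hD hb hz).ne']
  ring

lemma rpow_le_exp_mul_exp_neg {δ u c : ℝ} (hδ : 0 < δ) (hα : 0 < α) (hβ : 0 ≤ β)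
    (hu : u ≤ 2 * α * -Real.log δ + c) :
    δ ^ β ≤ Real.exp (β / (2 * α) * c) * Real.exp (-(β / (2 * α)) * u) := by
  rw [← Real.exp_add, Real.rpow_def_of_pos hδ, Real.exp_le_exp]
  calc Real.log δ * β = β / (2 * α) * (2 * α * Real.log δ) := by field_simp
    _ ≤ β / (2 * α) * (c - u) := by gcongr; linarith
    _ = β / (2 * α) * c + -(β / (2 * α)) * u := by ring

lemma div_four_add_le {Λ l u c : ℝ} (hα : 0 < α) (hl : Λ ≤ l) (hc : c ≤ α * Λ)
    (hu : u ≤ 2 * α * l + c) : Λ / 4 + 1 / (4 * α) * u ≤ l := by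
  refine le_of_mul_le_mul_left ?_ (show 0 < 4 * α by positivity)
  calc 4 * α * (Λ / 4 + 1 / (4 * α) * u) = α * Λ + u := by field_simp
    _ ≤ 4 * α * l := by linarith [mul_le_mul_of_nonneg_left hl hα.le]

lemma exists_forall_mul_rpow_neg_lt (K : ℝ) (hν : 0 < ν) (c : ℝ) (hε : 0 < ε) :
    ∃ Λ₀, ∀ Λ ≥ Λ₀, 0 < Λ ∧ c ≤ Λ ∧ K * (Λ / 4) ^ (-ν) < ε := by
  have hlim : Tendsto (fun Λ : ℝ ↦ K * (Λ / 4) ^ (-ν)) atTop (𝓝 0) := by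
    simpa using ((tendsto_rpow_neg_atTop hν).comp
      (tendsto_id.atTop_div_const four_pos)).const_mul K
  exact eventually_atTop.1 <| (eventually_gt_atTop 0).and <|
    (eventually_ge_atTop c).and <| hlim.eventually_lt_const hε

lemma exists_first_last_dist_eq {X : Type*} [PseudoMetricSpace X] {γ : ℝ → X} {x : X} {ρ t : ℝ}
    (hγ : ContinuousOn γ (Icc a b)) (ht : t ∈ Icc a b) (ha : dist (γ a) x ≤ ρ)
    (hρ : ρ ≤ dist (γ t) x) (hb : dist (γ b) x ≤ ρ) :
    ∃ t₁ t₂, a ≤ t₁ ∧ t₁ ≤ t₂ ∧ t₂ ≤ b ∧ dist (γ t₁) x = ρ ∧ dist (γ t₂) x = ρ ∧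
      MapsTo γ (Icc a t₁) (closedBall x ρ) ∧ MapsTo γ (Icc t₂ b) (closedBall x ρ) := by
  have hd : ContinuousOn (fun t ↦ dist (γ t) x) (Icc a b) :=
    fun t ht ↦ (hγ t ht).dist continuousWithinAt_const
  obtain ⟨t₁, ht₁, h₁, hlt₁⟩ :=
    exists_first_hitting_time ht.1 (hd.mono (Icc_subset_Icc_right ht.2)) ha hρ
  obtain ⟨t₂, ht₂, h₂, hlt₂⟩ :=
    exists_last_hitting_time ht.2 (hd.mono (Icc_subset_Icc_left ht.1)) hρ hb
  refine ⟨t₁, t₂, ht₁.1, ht₁.2.trans ht₂.1, ht₂.2, h₁, h₂, fun s hs ↦ ?_, fun s hs ↦ ?_⟩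
  · obtain rfl | hlt := hs.2.eq_or_lt
    · exact h₁.le
    · exact (hlt₁ s ⟨hs.1, hlt⟩).le
  · obtain rfl | hlt := hs.1.eq_or_lt
    · exact h₂.le
    · exact (hlt₂ s ⟨hlt, hs.2⟩).le

namespace IsLogGrowthDomain

lemma kobLength_le [CompleteSpace E] (H : IsLogGrowthDomain D o α C₀) (hΩ : IsOpen Ω)
    (hDΩ : D ⊆ Ω) (h : IsNearlyMinimal Ω η a b σ g) (ha : σ a ∈ D) (hb : σ b ∈ D) :
    kobLength Ω a b σ g ≤
      α * -Real.log (bdist D (σ a)) + α * -Real.log (bdist D (σ b)) + (2 * C₀ + η) := by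
  have hanti := kobDist_anti H.isOpen hΩ hDΩ (kobLengths_nonempty H.convex ha hb)
  have htri := kobDist_triangle_of_convex H.isOpen H.convex ha H.mem hb
  rw [kobDist_comm D o] at htri
  linarith [h.kobLength_le, H.kobDist_le _ ha, H.kobDist_le _ hb]

lemma exists_forall_abs_integral_le [CompleteSpace E] [Nontrivial E]
    (H : IsLogGrowthDomain D o α C₀) (hΩ : IsOpen Ω) (hDΩ : D ⊆ Ω)
    (h : IsNearlyMinimal Ω η a b σ g) (hσ : MapsTo σ (Icc a b) D) :
    ∃ t₀ ∈ Icc a b, ∀ t ∈ Icc a b, bdist D (σ t) ≤ bdist D (σ t₀) ∧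
      |∫ s in t₀..t, kobMetric Ω (σ s) (g s)| ≤
        2 * α * -Real.log (bdist D (σ t)) + (2 * C₀ + η) := by
  have hcont : ContinuousOn (fun t ↦ bdist D (σ t)) (Icc a b) :=
    (continuous_infDist_pt _).comp_continuousOn h.isACPathIn.continuousOn
  obtain ⟨t₀, ht₀, hmax⟩ :=
    isCompact_Icc.exists_isMaxOn (nonempty_Icc.2 h.isACPathIn.le) hcont
  refine ⟨t₀, ht₀, fun t ht ↦ ⟨hmax ht, ?_⟩⟩
  have hlog : α * -Real.log (bdist D (σ t₀)) ≤ α * -Real.log (bdist D (σ t)) :=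
    mul_le_mul_of_nonneg_left (neg_le_neg (Real.log_le_log
      (bdist_pos H.isOpen H.isBounded (hσ ht)) (hmax ht))) H.pos.le
  obtain hle | hle := le_total t₀ t
  · have hlen := H.kobLength_le hΩ hDΩ (h.restrict hΩ ht₀.1 hle ht.2) (hσ ht₀) (hσ ht)
    rw [← kobLength, abs_of_nonneg (kobLength_nonneg hle)]
    linarith
  · have hlen := H.kobLength_le hΩ hDΩ (h.restrict hΩ ht.1 hle ht₀.2) (hσ ht) (hσ ht₀)
    rw [intervalIntegral.integral_symm, abs_neg, ← kobLength, abs_of_nonneg (kobLength_nonneg hle)]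
    linarith

-- `bdist D (σ t)` decays exponentially in the Kobayashi length separating `σ t` from the deepest
-- point of the path, so the relative error `A * bdist D (σ t) ^ β` has a bounded integral.
lemma kobLength_le_add [CompleteSpace E] [Nontrivial E] (H : IsLogGrowthDomain D o α C₀)
    (hΩ : IsOpen Ω) (hDΩ : D ⊆ Ω) (hA : 0 ≤ A) (hβ : 0 < β)
    (h : IsNearlyMinimal Ω η a b σ g) (hσ : MapsTo σ (Icc a b) D)
    (hcmp : ∀ t ∈ Icc a b, kobMetric D (σ t) (g t) ≤
      (1 + A * bdist D (σ t) ^ β) * kobMetric Ω (σ t) (g t)) :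
    kobLength D a b σ g ≤ kobLength Ω a b σ g +
      2 * (A * Real.exp (β / (2 * α) * (2 * C₀ + η)) / (β / (2 * α))) := by
  have hα := H.pos
  obtain ⟨hab, hac, -⟩ := id h.isACPathIn
  obtain ⟨t₀, ht₀, hgrowth⟩ := H.exists_forall_abs_integral_le hΩ hDΩ h hσ
  have hΩint := h.isACPathIn.intervalIntegrable_kobMetric hΩ
  have hcont : ContinuousOn (fun t ↦ A * bdist D (σ t) ^ β) (uIcc a b) := by
    rw [uIcc_of_le hab]
    exact continuousOn_const.mul <| ((continuous_infDist_pt _).comp_continuousOn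
      h.isACPathIn.continuousOn).rpow_const fun _ _ ↦ .inr hβ.le
  have herr := hΩint.continuousOn_mul hcont
  calc kobLength D a b σ g
      ≤ ∫ t in a..b, (kobMetric Ω (σ t) (g t) +
          A * bdist D (σ t) ^ β * kobMetric Ω (σ t) (g t)) := by
        refine intervalIntegral.integral_mono_on hab
          (IsACPathIn.intervalIntegrable_kobMetric H.isOpen ⟨hab, hac, hσ⟩) (hΩint.add herr)
          fun t ht ↦ (hcmp t ht).trans_eq ?_
        ring
    _ = kobLength Ω a b σ g +
          ∫ t in a..b, A * bdist D (σ t) ^ β * kobMetric Ω (σ t) (g t) :=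
        intervalIntegral.integral_add hΩint herr
    _ ≤ _ := by
        gcongr
        refine integral_le_of_le_exp_neg_abs ht₀ (by positivity) (by positivity) hΩint
          (fun t _ ↦ kobMetric_nonneg _ _ _) herr fun t ht ↦ ?_
        refine mul_le_mul_of_nonneg_right ?_ (kobMetric_nonneg Ω (σ t) (g t))
        rw [mul_assoc A]
        exact mul_le_mul_of_nonneg_left (rpow_le_exp_mul_exp_neg
          (bdist_pos H.isOpen H.isBounded (hσ ht)) hα hβ.le (hgrowth t ht).2) hA

lemma dist_le_of_norm_mul_rpow_le [Nontrivial E] (H : IsLogGrowthDomain D o α C₀) (hΩ : IsOpen Ω)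
    (hB : 0 ≤ B) (hν : 0 < ν) (h : IsACPathIn Ω a b σ g) (hσ : MapsTo σ (Icc a b) D) {c t₀ : ℝ}
    (ht₀ : t₀ ∈ Icc a b)
    (hgrowth : ∀ t ∈ Icc a b, bdist D (σ t) ≤ bdist D (σ t₀) ∧
      |∫ s in t₀..t, kobMetric Ω (σ s) (g s)| ≤ 2 * α * -Real.log (bdist D (σ t)) + c)
    (hlow : ∀ t ∈ Icc a b,
      ‖g t‖ * |Real.log (bdist D (σ t))| ^ (1 + ν) ≤ B * kobMetric Ω (σ t) (g t))
    (hΛ : 0 < -Real.log (bdist D (σ t₀))) (hc : c / α ≤ -Real.log (bdist D (σ t₀))) :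
    dist (σ a) (σ b) ≤
      2 * (B / (1 / (4 * α) * ν)) * (-Real.log (bdist D (σ t₀)) / 4) ^ (-ν) := by
  have hα := H.pos
  rw [mul_assoc, dist_comm, dist_eq_norm, h.ac.2 b (right_mem_Icc.2 h.le), add_sub_cancel_left]
  refine (intervalIntegral.norm_integral_le_integral_norm h.le).trans ?_
  refine integral_le_of_le_rpow_neg_abs ht₀ (by positivity) hB (by positivity) hν
    (h.intervalIntegrable_kobMetric hΩ) (fun t _ ↦ kobMetric_nonneg _ _ _) h.ac.1.norm
    fun t ht ↦ ?_
  set Λ := -Real.log (bdist D (σ t₀))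
  set u := |∫ s in t₀..t, kobMetric Ω (σ s) (g s)|
  have hΛt : Λ ≤ -Real.log (bdist D (σ t)) := neg_le_neg <| Real.log_le_log
    (bdist_pos H.isOpen H.isBounded (hσ ht)) (hgrowth t ht).1
  have hpos : 0 < Λ / 4 + 1 / (4 * α) * u := by positivity
  have hle : Λ / 4 + 1 / (4 * α) * u ≤ |Real.log (bdist D (σ t))| :=
    (div_four_add_le hα hΛt ((div_le_iff₀' hα).1 hc) (hgrowth t ht).2).trans (neg_le_abs _)
  rw [Real.rpow_neg hpos.le, mul_right_comm, ← div_eq_mul_inv, le_div_iff₀ (by positivity)]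
  refine le_trans ?_ (hlow t ht)
  gcongr

lemma exists_forall_exists_le_bdist [CompleteSpace E] [Nontrivial E]
    (H : IsLogGrowthDomain D o α C₀) (hΩ : IsOpen Ω) (hDΩ : D ⊆ Ω) (hWD : W ⊆ D)
    (hB : 0 ≤ B) (hν : 0 < ν) (hε : 0 < ε) (η : ℝ)
    (hlow : ∀ z ∈ W, ∀ v, ‖v‖ * |Real.log (bdist D z)| ^ (1 + ν) ≤ B * kobMetric Ω z v) :
    ∃ δ₀, 0 < δ₀ ∧ ∀ ⦃a b : ℝ⦄ ⦃σ g : ℝ → E⦄, IsNearlyMinimal Ω η a b σ g →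
      MapsTo σ (Icc a b) W → ε ≤ dist (σ a) (σ b) → ∃ t ∈ Icc a b, δ₀ ≤ bdist D (σ t) := by
  obtain ⟨Λ₀, hΛ₀⟩ := exists_forall_mul_rpow_neg_lt (2 * (B / (1 / (4 * α) * ν))) hν
    ((2 * C₀ + η) / α) hε
  refine ⟨Real.exp (-Λ₀), Real.exp_pos _, fun a b σ g h hσW hfar ↦ ?_⟩
  have hσ := hσW.mono_right hWD
  obtain ⟨t₀, ht₀, hgrowth⟩ := H.exists_forall_abs_integral_le hΩ hDΩ h hσ
  refine ⟨t₀, ht₀, ?_⟩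
  by_contra! hlt
  have hlog := (Real.log_lt_iff_lt_exp (bdist_pos H.isOpen H.isBounded (hσ ht₀))).2 hlt
  obtain ⟨hΛ, hc, hsmall⟩ := hΛ₀ (-Real.log (bdist D (σ t₀))) (by linarith)
  have hdist := H.dist_le_of_norm_mul_rpow_le hΩ hB hν h.isACPathIn hσ ht₀ hgrowth
    (fun t ht ↦ hlow _ (hσW ht) _) hΛ hc
  linarith

lemma exists_forall_exists_kobDist_le_kobLength_add [CompleteSpace E] [Nontrivial E]
    (H : IsLogGrowthDomain D o α C₀) (hΩ : IsOpen Ω) (hDΩ : D ⊆ Ω) (hWD : W ⊆ D)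
    (hA : 0 ≤ A) (hβ : 0 < β) (hB : 0 ≤ B) (hν : 0 < ν) (hε : 0 < ε) (η : ℝ)
    (hcmp : ∀ z ∈ W, ∀ v, kobMetric D z v ≤ (1 + A * bdist D z ^ β) * kobMetric Ω z v)
    (hlow : ∀ z ∈ W, ∀ v, ‖v‖ * |Real.log (bdist D z)| ^ (1 + ν) ≤ B * kobMetric Ω z v) :
    ∃ K, ∀ ⦃a b : ℝ⦄ ⦃σ g : ℝ → E⦄, IsNearlyMinimal Ω η a b σ g → MapsTo σ (Icc a b) W →
      ε ≤ dist (σ a) (σ b) → ∃ u ∈ Icc a b,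
        kobDist D (σ a) o ≤ kobLength Ω a u σ g + K ∧
        kobDist D (σ b) o ≤ kobLength Ω u b σ g + K := by
  obtain ⟨δ₀, hδ₀, hdeep⟩ := H.exists_forall_exists_le_bdist hΩ hDΩ hWD hB hν hε η hlow
  set K := 2 * (A * Real.exp (β / (2 * α) * (2 * C₀ + η)) / (β / (2 * α)))
  refine ⟨K + (α * -Real.log δ₀ + C₀), fun a b σ g h hσW hfar ↦ ?_⟩
  have hσ := hσW.mono_right hWD
  obtain ⟨u, hu, hδu⟩ := hdeep h hσW hfar
  have huo : kobDist D (σ u) o ≤ α * -Real.log δ₀ + C₀ :=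
    (H.kobDist_le _ (hσ hu)).trans <| by
      have := H.pos
      gcongr
  have hpiece {c d : ℝ} (hac : a ≤ c) (hcd : c ≤ d) (hdb : d ≤ b) :
      kobDist D (σ c) (σ d) ≤ kobLength Ω c d σ g + K := by
    have hmin := h.restrict hΩ hac hcd hdb
    have hmem := Icc_subset_Icc hac hdb
    exact (IsACPathIn.kobDist_le_kobLength ⟨hcd, hmin.isACPathIn.ac, hσ.mono_left hmem⟩).trans
      (H.kobLength_le_add hΩ hDΩ hA hβ hmin (hσ.mono_left hmem) fun t ht ↦
        hcmp _ (hσW (hmem ht)) _)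
  have htri {t : ℝ} (ht : t ∈ Icc a b) :
      kobDist D (σ t) o ≤ kobDist D (σ t) (σ u) + kobDist D (σ u) o :=
    kobDist_triangle_of_convex H.isOpen H.convex (hσ ht) (hσ hu) H.mem
  have hab := h.isACPathIn.le
  refine ⟨u, hu, ?_, ?_⟩
  · linarith [htri (left_mem_Icc.2 hab), hpiece le_rfl hu.1 hu.2]
  · have hcomm := kobDist_comm D (σ b) (σ u)
    linarith [htri (right_mem_Icc.2 hab), hpiece hu.1 hu.2 le_rfl]

lemma kobDist_le_of_not_mapsTo [CompleteSpace E] (H : IsLogGrowthDomain D o α C₀)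
    (hΩ : IsOpen Ω) {K : ℝ} (h : IsACPathIn Ω a b σ g) (haD : σ a ∈ D) (hbD : σ b ∈ D)
    (ha : σ a ∈ ball ξ ε) (hb : σ b ∈ ball ξ ε)
    (hescape : ¬MapsTo σ (Icc a b) (closedBall ξ (2 * ε)))
    (hfar : ∀ ⦃c d⦄, a ≤ c → c ≤ d → d ≤ b → MapsTo σ (Icc c d) (closedBall ξ (2 * ε)) →
      ε ≤ dist (σ c) (σ d) → ∃ u ∈ Icc c d,
        kobDist D (σ c) o ≤ kobLength Ω c u σ g + K ∧
        kobDist D (σ d) o ≤ kobLength Ω u d σ g + K) :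
    kobDist D (σ a) (σ b) ≤ kobLength Ω a b σ g + 2 * K := by
  obtain ⟨t, ht, htε⟩ : ∃ t ∈ Icc a b, 2 * ε < dist (σ t) ξ := by
    simpa only [MapsTo, not_forall, mem_closedBall, not_le, exists_prop] using hescape
  rw [mem_ball] at ha hb
  have hε : 0 < ε := dist_nonneg.trans_lt ha
  obtain ⟨t₁, t₂, hat₁, ht₁₂, ht₂b, hdist₁, hdist₂, hball₁, hball₂⟩ :=
    exists_first_last_dist_eq h.continuousOn ht (by linarith) htε.le (by linarith)
  obtain ⟨u, hu, hau, -⟩ := hfar le_rfl hat₁ (ht₁₂.trans ht₂b) hball₁ (by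
    linarith [dist_triangle (σ t₁) (σ a) ξ, dist_comm (σ t₁) (σ a)])
  obtain ⟨w, hw, -, hwb⟩ := hfar (hat₁.trans ht₁₂) ht₂b le_rfl hball₂ (by
    linarith [dist_triangle (σ t₂) (σ b) ξ])
  have huw : u ≤ w := hu.2.trans (ht₁₂.trans hw.1)
  have htri := kobDist_triangle_of_convex H.isOpen H.convex haD H.mem hbD
  have hsplit := h.kobLength_add hΩ hu.1 (huw.trans hw.2)
  have hsplit' := (h.restrict hu.1 (huw.trans hw.2) le_rfl).kobLength_add hΩ huw hw.2
  have hmiddle := kobLength_nonneg (D := Ω) (σ := σ) (g := g) huw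
  linarith [kobDist_comm D o (σ b)]

lemma exists_kobDist_le_kobDist_add [CompleteSpace E] [Nontrivial E]
    (H : IsLogGrowthDomain D o α C₀) (hΩ : IsOpen Ω) (hDΩ : D ⊆ Ω) (hWD : W ⊆ D)
    (hξW : Ω ∩ closedBall ξ (2 * ε) ⊆ W)
    (hA : 0 ≤ A) (hβ : 0 < β) (hB : 0 ≤ B) (hν : 0 < ν) (hε : 0 < ε)
    (hcmp : ∀ z ∈ W, ∀ v, kobMetric D z v ≤ (1 + A * bdist D z ^ β) * kobMetric Ω z v)
    (hlow : ∀ z ∈ W, ∀ v, ‖v‖ * |Real.log (bdist D z)| ^ (1 + ν) ≤ B * kobMetric Ω z v) :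
    ∃ K, 0 < K ∧ ∀ p ∈ Ω ∩ ball ξ ε, ∀ q ∈ Ω ∩ ball ξ ε,
      kobDist D p q ≤ kobDist Ω p q + K := by
  obtain ⟨K₂, hfar⟩ := H.exists_forall_exists_kobDist_le_kobLength_add hΩ hDΩ hWD hA hβ hB hν hε 1
    hcmp hlow
  set K₁ := 2 * (A * Real.exp (β / (2 * α) * (2 * C₀ + 1)) / (β / (2 * α)))
  have hK₁ : 0 ≤ K₁ := by
    have := H.pos
    positivity
  refine ⟨K₁ + 2 * |K₂| + 1, by positivity, fun p hp q hq ↦ ?_⟩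
  have hmem {x : E} (hx : x ∈ Ω ∩ ball ξ ε) : x ∈ D :=
    hWD (hξW ⟨hx.1, ball_subset_closedBall (ball_subset_ball (by linarith) hx.2)⟩)
  obtain ⟨_, hτ⟩ : (kobLengths Ω p q).Nonempty := by
    simpa using Set.nonempty_of_mem
      ((isACPathIn_lineMap H.convex (hmem hp) (hmem hq)).mono hDΩ).kobLength_mem_kobLengths
  obtain ⟨a, b, σ, g, h, rfl, rfl⟩ := exists_isNearlyMinimal one_pos ⟨_, hτ⟩
  have hpath := h.isACPathIn
  have hσW {c d : ℝ} (hac : a ≤ c) (hdb : d ≤ b)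
      (hball : MapsTo σ (Icc c d) (closedBall ξ (2 * ε))) : MapsTo σ (Icc c d) W :=
    fun t ht ↦ hξW ⟨hpath.mapsTo (Icc_subset_Icc hac hdb ht), hball ht⟩
  by_cases hstay : MapsTo σ (Icc a b) (closedBall ξ (2 * ε))
  · have hσ := hσW le_rfl le_rfl hstay
    have hdist := IsACPathIn.kobDist_le_kobLength ⟨hpath.le, hpath.ac, hσ.mono_right hWD⟩
    have hlen : kobLength D a b σ g ≤ kobLength Ω a b σ g + K₁ :=
      H.kobLength_le_add hΩ hDΩ hA hβ h (hσ.mono_right hWD) fun t ht ↦ hcmp _ (hσ ht) _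
    linarith [h.kobLength_le, abs_nonneg K₂]
  · have hescape := H.kobDist_le_of_not_mapsTo hΩ hpath (hmem hp) (hmem hq) hp.2 hq.2 hstay
      fun c d hac hcd hdb hball ↦ hfar (h.restrict hΩ hac hcd hdb) (hσW hac hdb hball)
    linarith [h.kobLength_le, le_abs_self K₂]

end IsLogGrowthDomain

end NearlyMinimalPaths

theorem statement_7_general {E : Type*} [NormedAddCommGroup E] [NormedSpace ℂ E] [CompleteSpace E]
    [Nontrivial E] {Ω U : Set E} (hΩ : IsOpen Ω) (hb : Bornology.IsBounded Ω) (hU : IsOpen U)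
    (hlog : LogTypeConvex (Ω ∩ U)) {ξ : E} (hξ : ξ ∈ U) :
    ∃ ε : ℝ, 0 < ε ∧ ball ξ ε ⊆ U ∧ ∃ K' : ℝ, 0 < K' ∧
      ∀ p ∈ Ω ∩ ball ξ ε, ∀ q ∈ Ω ∩ ball ξ ε,
        kobDist Ω p q ≤ kobDist (Ω ∩ U) p q ∧
        kobDist (Ω ∩ U) p q ≤ kobDist Ω p q + K' := by
  obtain ⟨C, ν, hD⟩ := hlog
  obtain ⟨hopen, ⟨o, ho⟩, hDb, hc, hC, hν, -⟩ := id hD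
  obtain ⟨ε, hε, hεU⟩ : ∃ ε, 0 < ε ∧ ball ξ (4 * ε) ⊆ U := by
    obtain ⟨R, hR, hRU⟩ := Metric.isOpen_iff.1 hU ξ hξ
    exact ⟨R / 4, by positivity, by rwa [mul_div_cancel₀ R four_ne_zero]⟩
  have hball {r : ℝ} (hr : r ≤ 4) : ball ξ (r * ε) ⊆ U :=
    (ball_subset_ball (by gcongr)).trans hεU
  have hloc := localizesDiscs_of_ball_subset (D := Ω ∩ U) (V := ball ξ (3 * ε)) hb
    (le_max_left (diam Ω) ε) hε (le_max_right _ _) fun y hy ↦ inter_subset_inter_right Ω <|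
      (ball_subset_ball' (by linarith [mem_ball.1 hy])).trans hεU
  obtain ⟨α, C₀, H⟩ := exists_isLogGrowthDomain hopen hDb hc ho
  obtain ⟨A, hA, hcmp⟩ := hloc.exists_forall_kobMetric_le hΩ hD hε
  obtain ⟨K, hK, hle⟩ := H.exists_kobDist_le_kobDist_add (ξ := ξ) hΩ inter_subset_left
    (inter_subset_inter_right Ω <| (closedBall_subset_ball (by linarith)).trans
      (hball (by norm_num : (3 : ℝ) ≤ 4))) subset_rfl hA.le
    (div_pos hloc.pos four_pos) (by have := hloc.pos; positivity) hν hε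
    (fun z hz ↦ hcmp z hz.1 (ball_subset_ball' (by linarith [mem_closedBall.1 hz.2])))
    fun z hz ↦ hloc.norm_mul_rpow_le_kobMetric hΩ hD hz.1
      (closedBall_subset_ball (by linarith) hz.2)
  have hεU' : ball ξ ε ⊆ U := by simpa using hball (r := 1) (by norm_num)
  exact ⟨ε, hε, hεU', K, hK, fun p hp q hq ↦ ⟨kobDist_anti hopen hΩ inter_subset_left
    (kobLengths_nonempty hc ⟨hp.1, hεU' hp.2⟩ ⟨hq.1, hεU' hq.2⟩), hle p hp q hq⟩⟩

theorem statement_7 {n : ℕ} (hn : 2 ≤ n)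
    (Ω U : Set (EuclideanSpace ℂ (Fin n)))
    (hΩo : IsOpen Ω) (hΩc : IsConnected Ω) (hΩb : Bornology.IsBounded Ω)
    (hUo : IsOpen U)
    (hlog : LogTypeConvex (Ω ∩ U))
    (ξ : EuclideanSpace ℂ (Fin n)) (hξ : ξ ∈ frontier Ω ∩ U) :
    ∃ ε : ℝ, 0 < ε ∧ ball ξ ε ⊆ U ∧ ∃ K' : ℝ, 0 < K' ∧
      ∀ p ∈ Ω ∩ ball ξ ε, ∀ q ∈ Ω ∩ ball ξ ε,
        kobDist Ω p q ≤ kobDist (Ω ∩ U) p q ∧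
        kobDist (Ω ∩ U) p q ≤ kobDist Ω p q + K' := by
  have : Nonempty (Fin n) := ⟨⟨0, by omega⟩⟩
  exact statement_7_general hΩo hΩb hUo hlog hξ.2
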